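/- A function f ∈ L^1(-1,1) belongs to LlogL(-1,1) if and only if T(fχ_A) ∈ L^1(-1,1) for every Borel set A ⊆ (-1,1). Consequently, the optimal domain [T, L^1] := {f ∈ L^1(-1,1) : T(h) ∈ L^1(-1,1) for every measurable h with |h| ≤ |f|} equals LlogL(-1,1), and T : LlogL(-1,1) → L^1(-1,1) admits no continuous linear extension to any strictly larger Banach function space of measurable functions on (-1,1). -/

import Mathlib

open MeasureTheory Set Filter

noncomputable section

/-- Lebesgue measure restricted to the interval `(-1, 1)`. -/
def μI : Measure ℝ := volume.restrict (Set.Ioo (-1 : ℝ) 1)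

/-- The finite Hilbert transform: the principal-value limit
`T(f)(t) = lim_{ε→0⁺} (1/π) ∫_{x∈(-1,1), |x-t|≥ε} f(x)/(x-t) dx`. -/
def FHT (f : ℝ → ℂ) (t : ℝ) : ℂ :=
  limUnder (nhdsWithin (0 : ℝ) (Set.Ioi 0)) fun ε : ℝ =>
    (Real.pi : ℂ)⁻¹ *
      ∫ x in {x : ℝ | x ∈ Set.Ioo (-1 : ℝ) 1 ∧ ε ≤ |x - t|}, f x / ((x : ℂ) - (t : ℂ))

/-- The operator `T̂(g)(x) = -(1-x²)^{-1/2} T(t ↦ √(1-t²) g(t))(x)`. -/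
def hatT (g : ℝ → ℂ) (x : ℝ) : ℂ :=
  -((Real.sqrt (1 - x ^ 2) : ℂ))⁻¹ * FHT (fun t => (Real.sqrt (1 - t ^ 2) : ℂ) * g t) x

/-- Membership in the Zygmund space `L log L(-1,1)`:
`f` is a.e. measurable on `(-1,1)` and `∫ |f| log⁺|f| < ∞`. -/
def MemLlogL (f : ℝ → ℂ) : Prop :=
  AEStronglyMeasurable f μI ∧
    IntegrableOn (fun x => ‖f x‖ * max (Real.log ‖f x‖) 0) (Set.Ioo (-1 : ℝ) 1)

/-- The distribution function `λ ↦ |{x ∈ (-1,1) : |f(x)| > λ}|`. -/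
def distFun (f : ℝ → ℂ) (lam : ℝ) : ℝ :=
  (volume {x : ℝ | x ∈ Set.Ioo (-1 : ℝ) 1 ∧ lam < ‖f x‖}).toReal

/-- The decreasing rearrangement `f*` of `f`, a function on `(0,2)`. -/
def decRearr (f : ℝ → ℂ) (t : ℝ) : ℝ :=
  sInf {lam : ℝ | 0 ≤ lam ∧ distFun f lam ≤ t}

/-- The `L log L` norm `‖f‖ = ∫_0^2 f*(t) log(2e/t) dt`. -/
def llogLNorm (f : ℝ → ℂ) : ℝ :=
  ∫ t in Set.Ioo (0 : ℝ) 2, decRearr f t * Real.log (2 * Real.exp 1 / t)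

/-- The `L(log L)^α` norm `∫_0^2 f*(t) log^α(2e/t) dt` (for `α = 0` this is the `L¹` norm). -/
def zygNorm (α : ℝ) (f : ℝ → ℂ) : ℝ :=
  ∫ t in Set.Ioo (0 : ℝ) 2, decRearr f t * Real.log (2 * Real.exp 1 / t) ^ α

/-- Membership in the Zygmund space `L(log L)^α(-1,1)`. -/
def MemZyg (α : ℝ) (f : ℝ → ℂ) : Prop :=
  AEStronglyMeasurable f μI ∧
    IntegrableOn (fun t => decRearr f t * Real.log (2 * Real.exp 1 / t) ^ α)
      (Set.Ioo (0 : ℝ) 2)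

/-- Membership in `L(log L)²(-1,1)`: `∫ |f| (log(2+|f|))² < ∞`. -/
def MemLlogL2 (f : ℝ → ℂ) : Prop :=
  AEStronglyMeasurable f μI ∧
    IntegrableOn (fun x => ‖f x‖ * Real.log (2 + ‖f x‖) ^ 2) (Set.Ioo (-1 : ℝ) 1)

/-- The constant `c(β,γ) = max{1/(1-β), 1/(1-γ), 1/(β+γ-1)}`. -/
def cBG (β γ : ℝ) : ℝ := max (max (1 / (1 - β)) (1 / (1 - γ))) (1 / (β + γ - 1))

/-- A Banach function space (of measurable functions on `(-1,1)`), given by a membership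
predicate and a norm: a normed function lattice with the ideal property and the Fatou
property. -/
structure BanachFunctionSpace where
  Mem : (ℝ → ℂ) → Prop
  nrm : (ℝ → ℂ) → ℝ
  mem_meas : ∀ f, Mem f → AEStronglyMeasurable f μI
  nrm_nonneg : ∀ f, 0 ≤ nrm f
  nrm_eq_zero : ∀ f, Mem f → (nrm f = 0 ↔ f =ᵐ[μI] 0)
  add_mem : ∀ f g, Mem f → Mem g → Mem (f + g)
  smul_mem : ∀ (c : ℂ) (f : ℝ → ℂ), Mem f → Mem (c • f)
  nrm_add_le : ∀ f g, Mem f → Mem g → nrm (f + g) ≤ nrm f + nrm g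
  nrm_smul : ∀ (c : ℂ) (f : ℝ → ℂ), Mem f → nrm (c • f) = ‖c‖ * nrm f
  /-- the ideal property -/
  ideal : ∀ f g, Mem f → AEStronglyMeasurable g μI →
    (∀ᵐ x ∂μI, ‖g x‖ ≤ ‖f x‖) → Mem g ∧ nrm g ≤ nrm f
  /-- the Fatou property -/
  fatou : ∀ (F : ℕ → ℝ → ℂ) (f : ℝ → ℂ) (C : ℝ),
    AEStronglyMeasurable f μI →
    (∀ n, Mem (F n)) → (∀ n, nrm (F n) ≤ C) →
    (∀ᵐ x ∂μI, Monotone fun n => ‖F n x‖) →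
    (∀ᵐ x ∂μI, Tendsto (fun n => ‖F n x‖) atTop (nhds ‖f x‖)) →
    Mem f ∧ nrm f ≤ C

theorem mv_aux (g : ℂ → ℂ) (η B : ℝ) (hη : 0 < η)
    (hd : ∀ z : ℂ, -η < z.im → DifferentiableAt ℂ g z)
    (hb : ∀ z : ℂ, 0 ≤ z.im → ‖g z‖ ≤ B) :
    ∫ x : ℝ, (g x - g Complex.I) * ((1 + x ^ 2 : ℝ)⁻¹ : ℂ) = 0 := by
  set K : ℂ → ℂ := fun z => dslope g Complex.I z / (z + Complex.I) with hK
  have hKeq : ∀ z : ℂ, z ≠ Complex.I → z ≠ -Complex.I →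
      K z = (g z - g Complex.I) / (z ^ 2 + 1) := by
    intro z hz hz'
    have h1 : z - Complex.I ≠ 0 := sub_ne_zero.mpr hz
    have h2 : z + Complex.I ≠ 0 := by
      intro h; exact hz' (eq_neg_of_add_eq_zero_left h)
    have h3 : z ^ 2 + 1 = (z - Complex.I) * (z + Complex.I) := by
      ring_nf; simp [add_comm]
    simp only [hK, dslope_of_ne _ hz, slope_def_field]
    rw [h3]; field_simp
  have hB0 : 0 ≤ B := (norm_nonneg _).trans (hb 0 (by simp))
  have hKb : ∀ (R : ℝ) (z : ℂ), 1 < R → R ≤ ‖z‖ → 0 ≤ z.im → ‖K z‖ ≤ 2 * B / (R ^ 2 - 1) := by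
    intro R z hR hz hzi
    have hz1 : z ≠ Complex.I := by rintro rfl; simp at hz; linarith
    have hz2 : z ≠ -Complex.I := by rintro rfl; simp at hz; linarith
    rw [hKeq z hz1 hz2, norm_div]
    have hR2 : 0 < R ^ 2 - 1 := by nlinarith
    apply div_le_div₀ (by positivity) _ hR2 _
    · calc ‖g z - g Complex.I‖ ≤ ‖g z‖ + ‖g Complex.I‖ := norm_sub_le _ _
        _ ≤ B + B := add_le_add (hb z hzi) (hb _ (by simp))
        _ = 2 * B := by ring
    · have : ‖z ^ 2‖ ≤ ‖z ^ 2 + 1‖ + 1 := by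
        calc ‖z^2‖ = ‖(z ^ 2 + 1) - 1‖ := by ring_nf
          _ ≤ _ := (norm_sub_le _ _).trans (by simp)
      rw [norm_pow] at this
      nlinarith
  have hKd : ∀ z : ℂ, 0 ≤ z.im → DifferentiableAt ℂ K z := by
    intro z hz
    apply DifferentiableAt.div
    · have hopen : IsOpen {z : ℂ | -η < z.im} := isOpen_lt continuous_const Complex.continuous_im
      have : DifferentiableOn ℂ (dslope g Complex.I) {z : ℂ | -η < z.im} := by
        rw [Complex.differentiableOn_dslope]
        · intro z hz; exact (hd z hz).differentiableWithinAt
        · exact hopen.mem_nhds (by simp; linarith)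
      exact this.differentiableAt (hopen.mem_nhds (by simp; linarith))
    · fun_prop
    · intro h
      have := congrArg Complex.im h
      simp at this; linarith
  have hgc : Continuous fun x : ℝ => g (x : ℂ) := by
    rw [continuous_iff_continuousAt]
    intro x
    exact ((hd x (by simp [hη])).continuousAt).comp (Complex.continuous_ofReal.continuousAt)
  have hint : Integrable (fun x : ℝ => (g x - g Complex.I) * ((1 + x ^ 2 : ℝ)⁻¹ : ℂ)) := by
    apply Integrable.bdd_mul (c := 2 * B)
    · exact_mod_cast integrable_inv_one_add_sq.ofReal
    · exact (hgc.sub continuous_const).aestronglyMeasurable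
    · refine Eventually.of_forall fun x => ?_
      calc ‖g x - g Complex.I‖ ≤ ‖g x‖ + ‖g Complex.I‖ := norm_sub_le _ _
        _ ≤ B + B := add_le_add (hb x (by simp)) (hb _ (by simp))
        _ = 2 * B := by ring
  have hKx : ∀ x : ℝ, K x = (g x - g Complex.I) * ((1 + x ^ 2 : ℝ)⁻¹ : ℂ) := by
    intro x
    rw [hKeq]
    · push_cast; rw [div_eq_mul_inv, add_comm]
    · intro h; have := congrArg Complex.im h; simp at this
    · intro h; have := congrArg Complex.im h; simp at this
  have hlim : Tendsto (fun R : ℝ => ∫ x in (-R)..R, K x) atTop (nhds 0) := by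
    have hsmall : Tendsto (fun R : ℝ => 4 * R * (2 * B / (R ^ 2 - 1))) atTop (nhds 0) := by
      have h1 : Tendsto (fun R : ℝ => 8 * B * (R⁻¹ / (1 - R⁻¹ ^ 2))) atTop (nhds (8 * B * (0 / (1 - 0 ^ 2)))) := by
        apply Tendsto.const_mul
        apply Tendsto.div tendsto_inv_atTop_zero _ (by norm_num)
        exact (tendsto_inv_atTop_zero.pow 2).const_sub 1
      simp only [zero_div, mul_zero] at h1
      refine h1.congr' ?_
      filter_upwards [eventually_gt_atTop 1] with R hR
      have : R ^ 2 - 1 ≠ 0 := by nlinarith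
      have h0 : R ≠ 0 := by linarith
      have h' : (1 : ℝ) - R⁻¹ ^ 2 ≠ 0 := by
        intro h; apply this; field_simp at h; linarith
      field_simp
      ring
    refine squeeze_zero_norm' ?_ hsmall
    filter_upwards [eventually_gt_atTop 1] with R hR
    have hrect := Complex.integral_boundary_rect_eq_zero_of_differentiableOn K (-R : ℂ) (R + R * Complex.I)
      (by
        intro z hz
        have : z.im ∈ uIcc (0:ℝ) R := by
          have := hz.2; simpa using this
        rw [uIcc_of_le (by linarith)] at this
        exact (hKd z this.1).differentiableWithinAt)
    simp only [Complex.neg_re, Complex.ofReal_re, Complex.neg_im, Complex.ofReal_im, neg_zero, Complex.add_re, Complex.mul_re, Complex.I_re, Complex.I_im, Complex.add_im, Complex.mul_im, mul_zero, mul_one, zero_mul, add_zero, sub_zero, zero_add, Complex.ofReal_zero, smul_eq_mul] at hrect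
    have hM : 0 ≤ 2 * B / (R ^ 2 - 1) := div_nonneg (by positivity) (by nlinarith)
    have e1 : ‖∫ x in (-R)..R, K (x + R * Complex.I)‖ ≤ 2 * B / (R ^ 2 - 1) * |R - -R| := by
      apply intervalIntegral.norm_integral_le_of_norm_le_const
      intro x _
      apply hKb R _ hR
      · calc R ≤ |((x : ℂ) + R * Complex.I).im| := by simp; exact le_abs_self R
          _ ≤ _ := Complex.abs_im_le_norm _
      · simp; linarith
    have e2 : ‖∫ y in (0:ℝ)..R, K (R + y * Complex.I)‖ ≤ 2 * B / (R ^ 2 - 1) * |R - 0| := by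
      apply intervalIntegral.norm_integral_le_of_norm_le_const
      intro x hx
      rw [uIoc_of_le (by linarith)] at hx
      apply hKb R _ hR
      · calc R ≤ |((R : ℂ) + x * Complex.I).re| := by simp; exact le_abs_self R
          _ ≤ _ := Complex.abs_re_le_norm _
      · simp; linarith [hx.1]
    have e3 : ‖∫ y in (0:ℝ)..R, K ((-R : ℝ) + y * Complex.I)‖ ≤ 2 * B / (R ^ 2 - 1) * |R - 0| := by
      apply intervalIntegral.norm_integral_le_of_norm_le_const
      intro x hx
      rw [uIoc_of_le (by linarith)] at hx
      apply hKb R _ hR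
      · calc R ≤ |(((-R : ℝ) : ℂ) + x * Complex.I).re| := by simp; exact le_abs_self R
          _ ≤ _ := Complex.abs_re_le_norm _
      · simp; linarith [hx.1]
    rw [abs_of_pos (by linarith)] at e1 e2 e3
    have : (∫ x in (-R)..R, K x) = (∫ x in (-R)..R, K (x + R * Complex.I)) - Complex.I * (∫ y in (0:ℝ)..R, K (R + y * Complex.I)) + Complex.I * (∫ y in (0:ℝ)..R, K ((-R : ℝ) + y * Complex.I)) := by
      linear_combination hrect
    rw [this]
    calc _ ≤ ‖∫ x in (-R)..R, K (x + R * Complex.I)‖ + ‖Complex.I * (∫ y in (0:ℝ)..R, K (R + y * Complex.I))‖ + ‖Complex.I * (∫ y in (0:ℝ)..R, K ((-R : ℝ) + y * Complex.I))‖ := (norm_add_le _ _).trans (add_le_add_left (norm_sub_le _ _) _)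
      _ ≤ _ := by
        rw [norm_mul, norm_mul, Complex.norm_I]; linarith
  have h2 := intervalIntegral_tendsto_integral hint tendsto_neg_atTop_atBot tendsto_id
  refine tendsto_nhds_unique h2 (hlim.congr fun R => ?_)
  apply intervalIntegral.integral_congr
  intro x _
  exact hKx x

/-- `dω = dx/(1+x²)`. -/
def om : Measure ℝ := volume.withDensity fun x => ENNReal.ofReal ((1 + x ^ 2)⁻¹)

theorem om_integral {E : Type*} [NormedAddCommGroup E] [NormedSpace ℝ E] (h : ℝ → E) :
    ∫ x, h x ∂om = ∫ x, (1 + x ^ 2 : ℝ)⁻¹ • h x := by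
  unfold om
  rw [integral_withDensity_eq_integral_toReal_smul]
  · apply integral_congr_ae
    refine Eventually.of_forall fun x => ?_
    simp only
    rw [ENNReal.toReal_ofReal (by positivity)]
  · fun_prop
  · exact Eventually.of_forall fun x => ENNReal.ofReal_lt_top

theorem om_le : om ≤ volume := by
  unfold om
  calc _ ≤ volume.withDensity (fun _ => (1 : ENNReal)) := by
        apply withDensity_mono
        refine Eventually.of_forall fun x => ?_
        simp only
        rw [← ENNReal.ofReal_one]
        apply ENNReal.ofReal_le_ofReal
        apply inv_le_one_of_one_le₀; nlinarith [sq_nonneg x]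
    _ = volume := withDensity_one

theorem om_ac : om ≪ volume := withDensity_absolutelyContinuous _ _

theorem ac_om : volume ≪ om := by
  apply withDensity_absolutelyContinuous'
  · fun_prop
  · refine Eventually.of_forall fun x => ?_
    simp; positivity

instance : IsFiniteMeasure om := by
  apply isFiniteMeasure_withDensity_ofReal
  exact integrable_inv_one_add_sq.2

theorem om_real_univ : om.real univ = Real.pi := by
  have := om_integral (fun _ : ℝ => (1 : ℝ))
  simpa using this

theorem mv (H : ℂ → ℂ) (η B : ℝ) (hη : 0 < η)
    (hd : ∀ z : ℂ, 0 < z.im → DifferentiableAt ℂ H z)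
    (hb : ∀ z : ℂ, η ≤ z.im → ‖H z‖ ≤ B) :
    ∫ x : ℝ, H (x + η * Complex.I) ∂om = Real.pi * H ((1 + η) * Complex.I) := by
  have h := mv_aux (fun z => H (z + η * Complex.I)) η B hη
    (by
      intro z hz
      apply DifferentiableAt.comp (g := H)
      · apply hd; simp; linarith
      · fun_prop)
    (by intro z hz; apply hb; simp; linarith)
  have hc : Continuous fun x : ℝ => H (x + η * Complex.I) := by
    rw [continuous_iff_continuousAt]
    intro x
    exact ContinuousAt.comp (g := H) (f := fun x : ℝ => (x : ℂ) + η * Complex.I) (hd _ (by simp [hη])).continuousAt (by fun_prop)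
  have hi : Integrable (fun x : ℝ => H (x + η * Complex.I)) om :=
    Integrable.of_bound hc.aestronglyMeasurable B
      (Eventually.of_forall fun x => hb _ (by simp))
  have h2 : ∫ x : ℝ, (H (x + η * Complex.I) - H (Complex.I + η * Complex.I)) ∂om = 0 := by
    rw [om_integral, ← h]
    congr 1; ext x
    simp [mul_comm]
  rw [integral_sub hi (integrable_const _), integral_const, om_real_univ, sub_eq_zero] at h2
  rw [h2, Complex.real_smul]
  congr 2; ring

theorem mv_pt (H : ℂ → ℂ) (η B : ℝ) (hη : 0 < η)
    (hd : ∀ z : ℂ, 0 < z.im → DifferentiableAt ℂ H z)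
    (hb : ∀ z : ℂ, η ≤ z.im → ‖H z‖ ≤ B) (x y : ℝ) (hy : 0 < y) :
    ∫ s : ℝ, H ((x + y * s : ℝ) + η * Complex.I) ∂om = Real.pi * H (x + (y + η) * Complex.I) := by
  have h := mv (fun z => H (x + y * z)) (η / y) B (by positivity)
    (by
      intro z hz
      apply DifferentiableAt.comp (g := H)
      · apply hd; simp; positivity
      · fun_prop)
    (by
      intro z hz; apply hb; simp
      rw [div_le_iff₀ hy] at hz; linarith)
  have hy' : (y : ℂ) ≠ 0 := by exact_mod_cast hy.ne'
  convert h using 2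
  · ext s; congr 1; push_cast; field_simp; ring
  · congr 1; push_cast; field_simp

theorem cont_line (H : ℂ → ℂ) (hd : ∀ z : ℂ, 0 < z.im → DifferentiableAt ℂ H z) (η : ℝ)
    (hη : 0 < η) : Continuous fun x : ℝ => H (x + η * Complex.I) := by
  rw [continuous_iff_continuousAt]
  intro x
  exact ContinuousAt.comp (g := H) (f := fun x : ℝ => (x : ℂ) + η * Complex.I)
    (hd _ (by simp [hη])).continuousAt (by fun_prop)

theorem kern_integrable : Integrable fun s : ℝ => |s| * (2 * |s| / (1 + s ^ 2) ^ 2) := by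
  apply Integrable.mono' (integrable_inv_one_add_sq.const_mul 2)
  · apply Continuous.aestronglyMeasurable
    apply Continuous.mul (by fun_prop)
    exact Continuous.div (by fun_prop) (by fun_prop) (fun s => by positivity)
  · refine Eventually.of_forall fun s => ?_
    rw [Real.norm_of_nonneg (by positivity)]
    have : |s| * (2 * |s| / (1 + s ^ 2) ^ 2) = 2 * (s ^ 2 / (1 + s ^ 2) ^ 2) := by
      have h := sq_abs s
      rw [← h]; ring_nf
    rw [this]
    gcongr
    rw [div_le_iff₀ (by positivity)]
    have : (1 + s ^ 2)⁻¹ * (1 + s ^ 2) ^ 2 = 1 + s ^ 2 := by field_simp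
    rw [this]; linarith

theorem kern_limit (C : ℝ) (u : ℝ → ℂ) (hu : ∀ s, ‖u s‖ ≤ C * |s|) (l : Filter ℝ)
    (hl : l ≤ cocompact ℝ) : Tendsto (fun s : ℝ => ((1 + s ^ 2 : ℝ)⁻¹ : ℂ) * u s) l (nhds 0) := by
  have hC : 0 ≤ C := by have := hu 1; simp at this; exact (norm_nonneg _).trans this
  have h1 : Tendsto (fun s : ℝ => C * |s|⁻¹) (cocompact ℝ) (nhds 0) := by
    have : Tendsto (fun s : ℝ => |s|) (cocompact ℝ) atTop := tendsto_norm_cocompact_atTop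
    simpa using (this.inv_tendsto_atTop).const_mul C
  refine squeeze_zero_norm (fun s => ?_) (h1.mono_left hl)
  rw [norm_mul]
  have h2 : ‖((1 + s ^ 2 : ℝ)⁻¹ : ℂ)‖ = (1 + s ^ 2)⁻¹ := by
    rw [← Complex.ofReal_inv, Complex.norm_of_nonneg (by positivity)]
  rw [h2]
  calc (1 + s ^ 2)⁻¹ * ‖u s‖ ≤ (1 + s ^ 2)⁻¹ * (C * |s|) := by gcongr; exact hu s
    _ = C * ((1 + s ^ 2)⁻¹ * |s|) := by ring
    _ ≤ C * |s|⁻¹ := by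
      gcongr
      by_cases hs : s = 0
      · simp [hs]
      · have : 0 < |s| := abs_pos.mpr hs
        rw [inv_mul_eq_div, div_le_iff₀ (by positivity), ← sq_abs s]
        field_simp; nlinarith

theorem by_parts (H : ℂ → ℂ) (B : ℝ)
    (hd : ∀ z : ℂ, 0 < z.im → DifferentiableAt ℂ H z)
    (hb : ∀ z : ℂ, 0 < z.im → ‖H z‖ ≤ B) (η : ℝ) (hη : 0 < η) (x y : ℝ) (hy : 0 < y) :
    Real.pi * H (x + (y + η) * Complex.I) =
      ∫ s : ℝ, (((∫ t in (0:ℝ)..(x + y * s), H (t + η * Complex.I))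
        - ∫ t in (0:ℝ)..x, H (t + η * Complex.I)) / y) * ((2 * s / (1 + s ^ 2) ^ 2 : ℝ) : ℂ) := by
  have hc := cont_line H hd η hη
  have hB : 0 ≤ B := (norm_nonneg _).trans (hb Complex.I (by simp))
  rw [← mv_pt H η B hη hd (fun z hz => hb z (by linarith)) x y hy, om_integral]
  set Φ : ℝ → ℂ := fun x => ∫ t in (0:ℝ)..x, H (t + η * Complex.I) with hΦ
  have hΦd : ∀ x : ℝ, HasDerivAt Φ (H (x + η * Complex.I)) x := fun x =>
    intervalIntegral.integral_hasDerivAt_right (hc.intervalIntegrable _ _)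
      (hc.stronglyMeasurableAtFilter _ _) hc.continuousAt
  have hΦl : ∀ a b, ‖Φ a - Φ b‖ ≤ B * |a - b| := by
    intro a b
    rw [hΦ]; simp only
    rw [intervalIntegral.integral_interval_sub_left (hc.intervalIntegrable _ _) (hc.intervalIntegrable _ _)]
    exact intervalIntegral.norm_integral_le_of_norm_le_const fun t _ => hb _ (by simp [hη])
  set v : ℝ → ℂ := fun s => (Φ (x + y * s) - Φ x) / y with hv
  have hy' : (y : ℂ) ≠ 0 := by exact_mod_cast hy.ne'
  have hvd : ∀ s, HasDerivAt v (H ((x + y * s : ℝ) + η * Complex.I)) s := by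
    intro s
    have h1 : HasDerivAt (fun s : ℝ => x + y * s) y s := by
      simpa using ((hasDerivAt_id s).const_mul y).const_add x
    have h2 := ((hΦd (x + y * s)).scomp s h1).sub_const (Φ x) |>.div_const (y : ℂ)
    have e : y • H (((x + y * s : ℝ) : ℂ) + η * Complex.I) / (y : ℂ) = H ((x + y * s : ℝ) + η * Complex.I) := by
      rw [Complex.real_smul]; field_simp
    rw [e] at h2
    exact h2
  have hvb : ∀ s, ‖v s‖ ≤ B * |s| := by
    intro s
    rw [hv]; simp only [norm_div, Complex.norm_real, Real.norm_of_nonneg hy.le]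
    rw [div_le_iff₀ hy]
    calc _ ≤ B * |x + y * s - x| := hΦl _ _
      _ = B * |s| * y := by rw [add_sub_cancel_left, abs_mul, abs_of_pos hy]; ring
  have hvc : Continuous v := continuous_iff_continuousAt.mpr fun s => (hvd s).continuousAt
  have hud : ∀ s : ℝ, HasDerivAt (fun s : ℝ => ((1 + s ^ 2 : ℝ)⁻¹ : ℂ)) (((-(2 * s / (1 + s ^ 2) ^ 2) : ℝ)) : ℂ) s := by
    intro s
    have h1 : HasDerivAt (fun s : ℝ => 1 + s ^ 2) (2 * s) s := by
      simpa using (hasDerivAt_pow 2 s).const_add 1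
    have h2 := (h1.inv (by positivity)).ofReal_comp
    simp only [Pi.inv_apply, Complex.ofReal_inv, neg_div] at h2 
    exact h2
  have key := integral_mul_deriv_eq_deriv_mul (u := fun s : ℝ => ((1 + s ^ 2 : ℝ)⁻¹ : ℂ)) (v := v)
    (u' := fun s => (((-(2 * s / (1 + s ^ 2) ^ 2) : ℝ)) : ℂ)) (v' := fun s => H ((x + y * s : ℝ) + η * Complex.I))
    (a' := 0) (b' := 0)
    (fun s _ => hud s) (fun s _ => hvd s) ?_ ?_
    (kern_limit B v hvb _ (by rw [cocompact_eq_atBot_atTop]; exact le_sup_left))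
    (kern_limit B v hvb _ (by rw [cocompact_eq_atBot_atTop]; exact le_sup_right))
  · simp only [sub_zero, zero_sub] at key
    calc _ = ∫ s : ℝ, ((1 + s ^ 2 : ℝ)⁻¹ : ℂ) * H ((x + y * s : ℝ) + η * Complex.I) := by
          congr 1; ext s; rw [← Complex.ofReal_inv, Complex.real_smul]
      _ = _ := by
          rw [key, ← integral_neg]
          congr 1; ext s
          simp only [hv, Complex.ofReal_neg]; ring
  · apply Integrable.mul_bdd (c := B)
    · exact_mod_cast integrable_inv_one_add_sq.ofReal
    · apply Continuous.aestronglyMeasurable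
      exact hc.comp (by fun_prop : Continuous fun s : ℝ => x + y * s)
    · exact Eventually.of_forall fun s => hb _ (by simp [hη])
  · apply Integrable.mono' (kern_integrable.const_mul B)
    · apply Continuous.aestronglyMeasurable
      apply Continuous.mul _ hvc
      apply Complex.continuous_ofReal.comp
      apply Continuous.neg
      exact Continuous.div (by fun_prop) (by fun_prop) (fun s => by positivity)
    · refine Eventually.of_forall fun s => ?_
      simp only [Pi.mul_apply, norm_mul, Complex.norm_real, norm_neg, norm_div, norm_pow, Real.norm_eq_abs]
      rw [abs_of_pos (show (0:ℝ) < 1 + s ^ 2 by positivity), abs_two]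
      calc _ ≤ 2 * |s| / (1 + s ^ 2) ^ 2 * (B * |s|) := by gcongr; exact hvb s
        _ = _ := by ring

theorem prim_close (H : ℂ → ℂ) (B : ℝ)
    (hd : ∀ z : ℂ, 0 < z.im → DifferentiableAt ℂ H z)
    (hb : ∀ z : ℂ, 0 < z.im → ‖H z‖ ≤ B) (η η' : ℝ) (hη : 0 < η) (hη' : 0 < η') (x : ℝ) :
    ‖(∫ t in (0:ℝ)..x, H (t + η * Complex.I)) - ∫ t in (0:ℝ)..x, H (t + η' * Complex.I)‖
      ≤ 2 * B * |η' - η| := by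
  have hrect := Complex.integral_boundary_rect_eq_zero_of_differentiableOn H (η * Complex.I) (x + η' * Complex.I)
    (by
      intro z hz
      have : z.im ∈ uIcc η η' := by simpa using hz.2
      have h2 := this.1
      have : 0 < min η η' := lt_min hη hη'
      exact (hd z (lt_of_lt_of_le this h2)).differentiableWithinAt)
  simp only [Complex.ofReal_re, Complex.ofReal_im, Complex.add_re, Complex.mul_re, Complex.I_re, Complex.I_im, Complex.add_im, Complex.mul_im, mul_zero, mul_one, zero_mul, add_zero, sub_zero, zero_add, Complex.ofReal_zero, smul_eq_mul] at hrect
  have pos : ∀ t ∈ uIoc η η', 0 < t := fun t ht => lt_trans (lt_min hη hη') ht.1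
  have e2 : ‖∫ y in η..η', H (x + y * Complex.I)‖ ≤ B * |η' - η| :=
    intervalIntegral.norm_integral_le_of_norm_le_const fun t ht => hb _ (by simpa using pos t ht)
  have e3 : ‖∫ y in η..η', H (y * Complex.I)‖ ≤ B * |η' - η| :=
    intervalIntegral.norm_integral_le_of_norm_le_const fun t ht => hb _ (by simpa using pos t ht)
  have : (∫ t in (0:ℝ)..x, H (t + η * Complex.I)) - ∫ t in (0:ℝ)..x, H (t + η' * Complex.I) =
     Complex.I * (∫ y in η..η', H (y * Complex.I)) - Complex.I * (∫ y in η..η', H (x + y * Complex.I)) := by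
    linear_combination hrect
  rw [this]
  refine (norm_sub_le _ _).trans ?_
  rw [norm_mul, norm_mul, Complex.norm_I]; linarith

/-- A sequence of positive numbers tending to `0`. -/
def et (n : ℕ) : ℝ := 1 / ((n : ℝ) + 1)

theorem et_pos (n : ℕ) : 0 < et n := by unfold et; positivity

theorem et_le (n : ℕ) : et n ≤ 1 := by
  unfold et; rw [div_le_one (by positivity)]; have : (0:ℝ) ≤ n := by positivity
  linarith

theorem et_lim : Tendsto et atTop (nhds 0) := tendsto_one_div_add_atTop_nhds_zero_nat

theorem et_lim' : Tendsto et atTop (nhdsWithin 0 (Ioi 0)) :=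
  tendsto_nhdsWithin_iff.mpr ⟨et_lim, Eventually.of_forall et_pos⟩

theorem tendsto_up (H : ℂ → ℂ) (hd : ∀ z : ℂ, 0 < z.im → DifferentiableAt ℂ H z)
    (x y : ℝ) (hy : 0 < y) :
    Tendsto (fun n => H (x + (y + et n) * Complex.I)) atTop (nhds (H (x + y * Complex.I))) := by
  have h1 : ContinuousAt H (x + y * Complex.I) := (hd _ (by simp [hy])).continuousAt
  apply h1.tendsto.comp
  have h2 : Tendsto (fun n => (et n : ℂ)) atTop (nhds 0) := by
    exact_mod_cast (Complex.continuous_ofReal.tendsto 0).comp et_lim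
  have := ((h2.const_add (y : ℂ)).mul_const Complex.I).const_add (x : ℂ)
  simpa using this

theorem fatou_bdd (H : ℂ → ℂ) (B : ℝ)
    (hd : ∀ z : ℂ, 0 < z.im → DifferentiableAt ℂ H z)
    (hb : ∀ z : ℂ, 0 < z.im → ‖H z‖ ≤ B) :
    ∀ᵐ x : ℝ, ∃ h : ℂ, Tendsto (fun y : ℝ => H (x + y * Complex.I)) (nhdsWithin 0 (Ioi 0)) (nhds h) := by
  have hB : 0 ≤ B := (norm_nonneg _).trans (hb Complex.I (by simp))
  set Φ : ℕ → ℝ → ℂ := fun n x => ∫ t in (0:ℝ)..x, H (t + et n * Complex.I) with hΦ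
  have hΦl : ∀ n a b, ‖Φ n a - Φ n b‖ ≤ B * |a - b| := by
    intro n a b
    have hc := cont_line H hd (et n) (et_pos n)
    rw [hΦ]; simp only
    rw [intervalIntegral.integral_interval_sub_left (hc.intervalIntegrable _ _) (hc.intervalIntegrable _ _)]
    exact intervalIntegral.norm_integral_le_of_norm_le_const fun t _ => hb _ (by simp [et_pos])
  have hex : ∀ x, ∃ p, Tendsto (fun n => Φ n x) atTop (nhds p) := by
    intro x
    apply cauchySeq_tendsto_of_complete
    have hcs : CauchySeq et := et_lim.cauchySeq
    rw [Metric.cauchySeq_iff'] at hcs ⊢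
    intro ε hε
    obtain ⟨N, hN⟩ := hcs (ε / (2 * B + 1)) (by positivity)
    refine ⟨N, fun n hn => ?_⟩
    have h1 := prim_close H B hd hb (et n) (et N) (et_pos n) (et_pos N) x
    have h2 := hN n hn
    rw [Real.dist_eq, abs_sub_comm, lt_div_iff₀ (by positivity)] at h2
    rw [dist_eq_norm]
    refine h1.trans_lt ?_
    nlinarith [abs_nonneg (et N - et n)]
  choose Φ0 hΦ0 using hex
  have hl0 : ∀ a b, ‖Φ0 a - Φ0 b‖ ≤ B * |a - b| := fun a b =>
    le_of_tendsto ((hΦ0 a).sub (hΦ0 b)).norm (Eventually.of_forall fun n => hΦl n a b)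
  have hlip : LipschitzWith ⟨B, hB⟩ Φ0 :=
    LipschitzWith.of_dist_le_mul fun a b => by
      rw [dist_eq_norm, Real.dist_eq]; exact hl0 a b
  have hform : ∀ x y : ℝ, 0 < y → Real.pi * H (x + y * Complex.I) =
      ∫ s : ℝ, ((Φ0 (x + y * s) - Φ0 x) / y) * ((2 * s / (1 + s ^ 2) ^ 2 : ℝ) : ℂ) := by
    intro x y hy
    refine tendsto_nhds_unique ((tendsto_up H hd x y hy).const_mul (Real.pi : ℂ)) ?_
    simp_rw [fun n => by_parts H B hd hb (et n) (et_pos n) x y hy]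
    apply tendsto_integral_of_dominated_convergence (fun s : ℝ => B * (|s| * (2 * |s| / (1 + s ^ 2) ^ 2)))
    · intro n
      have hc := cont_line H hd (et n) (et_pos n)
      have hΦc : Continuous (Φ n) := (intervalIntegral.continuous_primitive (fun a b => hc.intervalIntegrable a b) 0)
      apply Continuous.aestronglyMeasurable
      apply Continuous.mul
      · exact ((hΦc.comp (by fun_prop : Continuous fun s : ℝ => x + y * s)).sub continuous_const).div_const _
      · apply Complex.continuous_ofReal.comp
        exact Continuous.div (by fun_prop) (by fun_prop) (fun s => by positivity)
    · exact kern_integrable.const_mul B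
    · intro n
      refine Eventually.of_forall fun s => ?_
      simp only [norm_mul, Complex.norm_real, norm_div, norm_pow, Real.norm_eq_abs]
      rw [abs_of_pos (show (0:ℝ) < 1 + s ^ 2 by positivity), abs_two, abs_of_pos hy, ← mul_assoc]
      gcongr
      rw [div_le_iff₀ hy]
      calc _ ≤ B * |x + y * s - x| := hΦl n _ _
        _ = B * |s| * y := by rw [add_sub_cancel_left, abs_mul, abs_of_pos hy]; ring
    · refine Eventually.of_forall fun s => ?_
      exact (((hΦ0 _).sub (hΦ0 _)).div_const _).mul_const _
  filter_upwards [hlip.ae_differentiableAt] with x hx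
  have hx' := hx.hasDerivAt
  set D := deriv Φ0 x
  refine ⟨(Real.pi : ℂ)⁻¹ * ∫ s : ℝ, (s * D) * ((2 * s / (1 + s ^ 2) ^ 2 : ℝ) : ℂ), ?_⟩
  have hπ : (Real.pi : ℂ) ≠ 0 := by exact_mod_cast Real.pi_ne_zero
  have : Tendsto (fun y : ℝ => (Real.pi : ℂ)⁻¹ * ∫ s : ℝ, ((Φ0 (x + y * s) - Φ0 x) / y) * ((2 * s / (1 + s ^ 2) ^ 2 : ℝ) : ℂ))
      (nhdsWithin 0 (Ioi 0)) (nhds ((Real.pi : ℂ)⁻¹ * ∫ s : ℝ, (s * D) * ((2 * s / (1 + s ^ 2) ^ 2 : ℝ) : ℂ))) := by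
    apply Tendsto.const_mul
    apply tendsto_integral_filter_of_dominated_convergence (fun s : ℝ => B * (|s| * (2 * |s| / (1 + s ^ 2) ^ 2)))
    · refine Eventually.of_forall fun y => ?_
      apply Continuous.aestronglyMeasurable
      apply Continuous.mul
      · exact ((hlip.continuous.comp (by fun_prop : Continuous fun s : ℝ => x + y * s)).sub continuous_const).div_const _
      · apply Complex.continuous_ofReal.comp
        exact Continuous.div (by fun_prop) (by fun_prop) (fun s => by positivity)
    · filter_upwards [self_mem_nhdsWithin] with y hy
      rw [mem_Ioi] at hy
      refine Eventually.of_forall fun s => ?_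
      simp only [norm_mul, Complex.norm_real, norm_div, norm_pow, Real.norm_eq_abs]
      rw [abs_of_pos (show (0:ℝ) < 1 + s ^ 2 by positivity), abs_two, abs_of_pos hy, ← mul_assoc]
      gcongr
      rw [div_le_iff₀ hy]
      calc _ ≤ B * |x + y * s - x| := hl0 _ _
        _ = B * |s| * y := by rw [add_sub_cancel_left, abs_mul, abs_of_pos hy]; ring
    · exact kern_integrable.const_mul B
    · refine Eventually.of_forall fun s => ?_
      apply Tendsto.mul_const
      have h1 : HasDerivAt (fun y : ℝ => x + y * s) s 0 := by
        simpa using ((hasDerivAt_id (0:ℝ)).mul_const s).const_add x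
      have h2 := HasDerivAt.scomp (h := fun y : ℝ => x + y * s) (g₁ := Φ0) (h' := s) (g₁' := D) 0 (by simpa using hx') h1
      have h3 := h2.tendsto_slope_zero_right
      simp only [Function.comp_def, zero_add, zero_mul, add_zero] at h3
      rw [← Complex.real_smul (x := s)]
      refine h3.congr fun y => ?_
      rw [Complex.real_smul, Complex.ofReal_inv, div_eq_inv_mul]
  refine this.congr' ?_
  filter_upwards [self_mem_nhdsWithin] with y hy
  rw [← hform x y hy]
  field_simp

theorem mv0 (H : ℂ → ℂ) (B : ℝ)
    (hd : ∀ z : ℂ, 0 < z.im → DifferentiableAt ℂ H z)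
    (hb : ∀ z : ℂ, 0 < z.im → ‖H z‖ ≤ B) (h : ℝ → ℂ)
    (hh : ∀ᵐ x : ℝ, Tendsto (fun n => H (x + et n * Complex.I)) atTop (nhds (h x))) :
    ∫ x, h x ∂om = Real.pi * H Complex.I := by
  have h1 : Tendsto (fun n => ∫ x : ℝ, H (x + et n * Complex.I) ∂om) atTop (nhds (∫ x, h x ∂om)) := by
    apply tendsto_integral_of_dominated_convergence (fun _ => B)
    · intro n
      exact (cont_line H hd _ (et_pos n)).aestronglyMeasurable
    · exact integrable_const _
    · intro n
      exact Eventually.of_forall fun x => hb _ (by simp [et_pos])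
    · exact om_ac.ae_le hh
  have h2 := (tendsto_up H hd 0 1 one_pos).const_mul (Real.pi : ℂ)
  refine tendsto_nhds_unique h1 ?_
  simp only [Complex.ofReal_zero, Complex.ofReal_one, zero_add, one_mul] at h2
  refine h2.congr fun n => ?_
  rw [mv H (et n) B (et_pos n) hd (fun z hz => hb z (lt_of_lt_of_le (et_pos n) hz))]

/-- `W(z) = 1 + (1/(πi)) ∫ f(x)/(x-z) dx`. -/
def Wf (f : ℝ → ℝ) (z : ℂ) : ℂ := 1 + (-Complex.I / Real.pi) * ∫ x : ℝ, (f x : ℂ) / ((x : ℂ) - z)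

theorem sub_ne (z : ℂ) (hz : 0 < z.im) (x : ℝ) : (x : ℂ) - z ≠ 0 := by
  intro h
  have := congrArg Complex.im h
  simp at this; linarith

theorem im_le_norm_sub (z : ℂ) (_hz : 0 < z.im) (x : ℝ) : z.im ≤ ‖(x : ℂ) - z‖ := by
  have := Complex.abs_im_le_norm ((x : ℂ) - z)
  simp only [Complex.sub_im, Complex.ofReal_im, zero_sub, abs_neg] at this
  exact (le_abs_self _).trans this

theorem W_integrable (f : ℝ → ℝ) (hf : Integrable f) (z : ℂ) (hz : 0 < z.im) :
    Integrable fun x : ℝ => (f x : ℂ) / ((x : ℂ) - z) := by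
  simp_rw [div_eq_mul_inv]
  apply Integrable.mul_bdd (c := z.im⁻¹) hf.ofReal
  · apply Continuous.aestronglyMeasurable
    exact Continuous.inv₀ (by fun_prop) (sub_ne z hz)
  · refine Eventually.of_forall fun x => ?_
    rw [norm_inv]
    exact inv_anti₀ hz (im_le_norm_sub z hz x)

theorem W_diff (f : ℝ → ℝ) (hf : Integrable f) (z : ℂ) (hz : 0 < z.im) :
    DifferentiableAt ℂ (Wf f) z := by
  unfold Wf
  apply DifferentiableAt.const_add
  apply DifferentiableAt.const_mul
  have hs : {w : ℂ | z.im / 2 < w.im} ∈ nhds z :=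
    (isOpen_lt continuous_const Complex.continuous_im).mem_nhds (by simp; linarith)
  have := hasDerivAt_integral_of_dominated_loc_of_deriv_le (μ := volume) (𝕜 := ℂ)
    (F := fun w (x : ℝ) => (f x : ℂ) / ((x : ℂ) - w))
    (F' := fun w (x : ℝ) => (f x : ℂ) / ((x : ℂ) - w) ^ 2) (x₀ := z)
    (bound := fun x => |f x| * ((z.im / 2)⁻¹) ^ 2) hs ?_ (W_integrable f hf z hz) ?_ ?_ ?_ ?_
  · exact this.2.differentiableAt
  · filter_upwards [hs] with w hw
    have hw0 : z.im / 2 < w.im := hw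
    have hw' : 0 < w.im := by linarith
    exact (W_integrable f hf w hw').aestronglyMeasurable
  · apply AEStronglyMeasurable.div₀ hf.ofReal.aestronglyMeasurable
    · apply Continuous.aestronglyMeasurable; fun_prop
  · refine Eventually.of_forall fun x w hw => ?_
    have hw' : z.im / 2 < w.im := hw
    rw [norm_div, norm_pow, Complex.norm_real, Real.norm_eq_abs, div_eq_mul_inv, ← inv_pow]
    gcongr
    have := im_le_norm_sub w (by linarith) x
    linarith
  · exact hf.abs.mul_const _
  · refine Eventually.of_forall fun x w hw => ?_
    have hw' : z.im / 2 < w.im := hw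
    have hne := sub_ne w (by linarith) x
    have h1 : HasDerivAt (fun w : ℂ => (x : ℂ) - w) (-1) w := by
      simpa using (hasDerivAt_id w).const_sub (x : ℂ)
    have h2 := (h1.inv hne).const_mul (f x : ℂ)
    rw [neg_neg, mul_one_div] at h2
    exact h2

theorem W_norm (f : ℝ → ℝ) (hf : Integrable f) (hf0 : ∀ x, 0 ≤ f x) (z : ℂ) (d : ℝ) (hd : 0 < d)
    (h : ∀ x, f x ≠ 0 → d ≤ ‖(x : ℂ) - z‖) : ‖Wf f z‖ ≤ 1 + (∫ x, f x) / d := by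
  unfold Wf
  have h1 : ‖∫ x : ℝ, (f x : ℂ) / ((x : ℂ) - z)‖ ≤ ∫ x, f x / d := by
    apply norm_integral_le_of_norm_le (hf.div_const d)
    refine Eventually.of_forall fun x => ?_
    rw [norm_div, Complex.norm_real, Real.norm_of_nonneg (hf0 x)]
    by_cases hx : f x = 0
    · simp [hx]
    · exact div_le_div_of_nonneg_left (hf0 x) hd (h x hx)
  rw [integral_div] at h1
  refine (norm_add_le _ _).trans ?_
  rw [norm_one, norm_mul]
  have h2 : ‖-Complex.I / (Real.pi : ℂ)‖ ≤ 1 := by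
    rw [norm_div, norm_neg, Complex.norm_I, Complex.norm_real, Real.norm_of_nonneg Real.pi_pos.le]
    rw [div_le_one Real.pi_pos]; linarith [Real.pi_gt_three]
  have h3 : 0 ≤ ∫ x, f x := integral_nonneg hf0
  nlinarith [norm_nonneg (∫ x : ℝ, (f x : ℂ) / ((x : ℂ) - z))]

theorem W_re (f : ℝ → ℝ) (hf : Integrable f) (z : ℂ) (hz : 0 < z.im) :
    (Wf f z).re = 1 + Real.pi⁻¹ * ∫ x, f x * (z.im / ((x - z.re) ^ 2 + z.im ^ 2)) := by
  have h := Complex.imCLM.integral_comp_comm (W_integrable f hf z hz)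
  simp only [Complex.imCLM_apply] at h
  unfold Wf
  have e : -Complex.I / (Real.pi : ℂ) = ((-Real.pi⁻¹ : ℝ) : ℂ) * Complex.I := by
    push_cast; rw [div_eq_mul_inv]; ring
  rw [e, mul_assoc]
  simp only [Complex.add_re, Complex.one_re, Complex.re_ofReal_mul, Complex.I_mul_re]
  rw [← h]
  have : ∀ x : ℝ, ((f x : ℂ) / ((x : ℂ) - z)).im = f x * (z.im / ((x - z.re) ^ 2 + z.im ^ 2)) := by
    intro x
    rw [Complex.div_im]
    simp [Complex.normSq_apply]
    rw [neg_div, neg_neg, mul_div_assoc]; congr 2; ring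
  simp_rw [this]; ring

theorem W_im (f : ℝ → ℝ) (hf : Integrable f) (z : ℂ) (hz : 0 < z.im) :
    (Wf f z).im = -(Real.pi⁻¹ * ∫ x, f x * ((x - z.re) / ((x - z.re) ^ 2 + z.im ^ 2))) := by
  have h := Complex.reCLM.integral_comp_comm (W_integrable f hf z hz)
  simp only [Complex.reCLM_apply] at h
  unfold Wf
  have e : -Complex.I / (Real.pi : ℂ) = ((-Real.pi⁻¹ : ℝ) : ℂ) * Complex.I := by
    push_cast; rw [div_eq_mul_inv]; ring
  rw [e, mul_assoc]
  simp only [Complex.add_im, Complex.one_im, Complex.im_ofReal_mul, Complex.I_mul_im, zero_add]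
  rw [← h]
  have : ∀ x : ℝ, ((f x : ℂ) / ((x : ℂ) - z)).re = f x * ((x - z.re) / ((x - z.re) ^ 2 + z.im ^ 2)) := by
    intro x
    rw [Complex.div_re]
    simp [Complex.normSq_apply]
    rw [mul_div_assoc]; congr 2; ring
  simp_rw [this]; ring

theorem W_re_ge (f : ℝ → ℝ) (hf : Integrable f) (hf0 : ∀ x, 0 ≤ f x) (z : ℂ) (hz : 0 < z.im) :
    1 ≤ (Wf f z).re := by
  rw [W_re f hf z hz]
  have : 0 ≤ ∫ x, f x * (z.im / ((x - z.re) ^ 2 + z.im ^ 2)) :=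
    integral_nonneg fun x => mul_nonneg (hf0 x) (by positivity)
  have := Real.pi_pos
  have : 0 ≤ Real.pi⁻¹ * ∫ x, f x * (z.im / ((x - z.re) ^ 2 + z.im ^ 2)) := by positivity
  linarith

theorem W_norm_ge (f : ℝ → ℝ) (hf : Integrable f) (hf0 : ∀ x, 0 ≤ f x) (z : ℂ) (hz : 0 < z.im) :
    1 ≤ ‖Wf f z‖ :=
  (W_re_ge f hf hf0 z hz).trans ((le_abs_self _).trans (Complex.abs_re_le_norm _))

theorem W_norm' (f : ℝ → ℝ) (hf : Integrable f) (hf0 : ∀ x, 0 ≤ f x) (z : ℂ) (d : ℝ) (hd : 0 < d)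
    (h : d ≤ z.im) : ‖Wf f z‖ ≤ 1 + (∫ x, f x) / d :=
  W_norm f hf hf0 z d hd fun x _ => h.trans (im_le_norm_sub z (by linarith) x)

theorem norm_log_le (w : ℂ) (hw : 1 ≤ ‖w‖) : ‖Complex.log w‖ ≤ Real.log ‖w‖ + Real.pi := by
  have h1 := Complex.norm_le_abs_re_add_abs_im (Complex.log w)
  rw [Complex.log_re, Complex.log_im, abs_of_nonneg (Real.log_nonneg hw)] at h1
  linarith [Complex.abs_arg_le_pi w]

theorem W_log_diff (f : ℝ → ℝ) (hf : Integrable f) (hf0 : ∀ x, 0 ≤ f x) (z : ℂ) (hz : 0 < z.im) :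
    DifferentiableAt ℂ (fun z => Complex.log (Wf f z)) z := by
  apply (W_diff f hf z hz).clog
  left
  linarith [W_re_ge f hf hf0 z hz]

theorem W_lim (f : ℝ → ℝ) (hf : Integrable f) (hf0 : ∀ x, 0 ≤ f x) :
    ∀ᵐ x : ℝ, ∃ w : ℂ, Tendsto (fun y : ℝ => Wf f (x + y * Complex.I)) (nhdsWithin 0 (Ioi 0)) (nhds w) := by
  have hne : ∀ z : ℂ, 0 < z.im → Wf f z ≠ 0 := fun z hz h => by
    have := W_re_ge f hf hf0 z hz
    rw [h] at this; simp at this; linarith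
  have hH := fatou_bdd (fun z => (Wf f z)⁻¹) 1
    (fun z hz => (W_diff f hf z hz).inv (hne z hz))
    (fun z hz => by rw [norm_inv]; exact inv_le_one_of_one_le₀ (W_norm_ge f hf hf0 z hz))
  set M := ∫ x, f x with hM
  have hM0 : 0 ≤ M := integral_nonneg hf0
  have hbd : ∀ n, ∫⁻ x : ℝ, ENNReal.ofReal (Real.log ‖Wf f (x + et n * Complex.I)‖) ∂om ≤
      ENNReal.ofReal (Real.pi * Real.log (1 + M)) := by
    intro n
    have hl0 : ∀ z : ℂ, 0 < z.im → 0 ≤ Real.log ‖Wf f z‖ := fun z hz =>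
      Real.log_nonneg (W_norm_ge f hf hf0 z hz)
    have hb : ∀ z : ℂ, et n ≤ z.im → ‖Complex.log (Wf f z)‖ ≤ (1 + M / et n) + Real.pi := by
      intro z hz
      have hz' := lt_of_lt_of_le (et_pos n) hz
      refine (norm_log_le _ (W_norm_ge f hf hf0 z hz')).trans ?_
      have h1 := Real.log_le_self (norm_nonneg (Wf f z))
      have h2 := W_norm' f hf hf0 z (et n) (et_pos n) hz
      linarith
    have hi : Integrable (fun x : ℝ => Complex.log (Wf f (x + et n * Complex.I))) om :=
      Integrable.of_bound (cont_line (fun z => Complex.log (Wf f z)) (W_log_diff f hf hf0) _ (et_pos n)).aestronglyMeasurable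
        ((1 + M / et n) + Real.pi) (Eventually.of_forall fun x => hb _ (by simp))
    have h1 := mv (fun z => Complex.log (Wf f z)) (et n) ((1 + M / et n) + Real.pi) (et_pos n)
      (W_log_diff f hf hf0) hb
    have h2 := Complex.reCLM.integral_comp_comm hi
    simp only [Complex.reCLM_apply] at h2
    rw [h1] at h2
    simp only [Complex.log_re, Complex.re_ofReal_mul] at h2
    rw [← ofReal_integral_eq_lintegral_ofReal]
    · apply ENNReal.ofReal_le_ofReal
      rw [h2]
      have h3 := W_norm' f hf hf0 ((1 + et n) * Complex.I) 1 one_pos (by simp [(et_pos n).le])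
      have h4 := W_norm_ge f hf hf0 ((1 + et n) * Complex.I) (by simp; linarith [et_pos n])
      rw [div_one] at h3
      have := Real.pi_pos
      gcongr
    · have := hi.re
      simpa [Complex.log_re] using this
    · exact Eventually.of_forall fun x => hl0 _ (by simp [et_pos])
  have hF : ∫⁻ x : ℝ, liminf (fun n => ENNReal.ofReal (Real.log ‖Wf f (x + et n * Complex.I)‖)) atTop ∂om ≠ ⊤ := by
    have hm : ∀ n, Measurable fun x : ℝ => ENNReal.ofReal (Real.log ‖Wf f (x + et n * Complex.I)‖) := by
      intro n
      have := (cont_line (Wf f) (W_diff f hf) _ (et_pos n)).measurable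
      fun_prop
    have h1 := lintegral_liminf_le (μ := om) (u := atTop) hm
    refine (lt_of_le_of_lt (h1.trans ?_) (ENNReal.ofReal_lt_top (r := Real.pi * Real.log (1 + M)))).ne
    apply liminf_le_of_frequently_le'
    exact (Eventually.of_forall hbd).frequently
  have hfin := ac_om.ae_le (ae_lt_top' (μ := om) ?_ hF)
  · filter_upwards [hH, hfin] with x hx hx2
    obtain ⟨h, hh⟩ := hx
    by_cases h0 : h = 0
    · exfalso
      rw [h0] at hh
      have h1 := (tendsto_norm_zero.comp hh).comp et_lim'
      have h2 : Tendsto (fun n => ‖(Wf f (x + et n * Complex.I))⁻¹‖⁻¹) atTop atTop := by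
        apply Tendsto.inv_tendsto_nhdsGT_zero
        apply tendsto_nhdsWithin_iff.mpr ⟨h1, ?_⟩
        refine Eventually.of_forall fun n => ?_
        simp only [mem_Ioi, Function.comp]
        have := hne (x + et n * Complex.I) (by simp [et_pos])
        exact norm_pos_iff.mpr (inv_ne_zero this)
      simp only [norm_inv, inv_inv] at h2
      have h3 := ENNReal.tendsto_ofReal_atTop.comp (Real.tendsto_log_atTop.comp h2)
      rw [show liminf (fun n => ENNReal.ofReal (Real.log ‖Wf f (x + et n * Complex.I)‖)) atTop = ⊤ from h3.liminf_eq] at hx2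
      exact lt_irrefl _ hx2
    · refine ⟨h⁻¹, ?_⟩
      simpa using hh.inv₀ h0
  · apply Measurable.aemeasurable
    apply Measurable.liminf
    intro n
    have := (cont_line (Wf f) (W_diff f hf) _ (et_pos n)).measurable
    fun_prop

/-- The Poisson kernel (times `π`). -/
def Pk (ε x y : ℝ) : ℝ := ε / ((y - x) ^ 2 + ε ^ 2)

theorem Pk_nonneg (ε x y : ℝ) (hε : 0 < ε) : 0 ≤ Pk ε x y := by unfold Pk; positivity

theorem Pk_eq (ε x y : ℝ) (hε : 0 < ε) : Pk ε x y = ε⁻¹ * (1 + ((y - x) / ε) ^ 2)⁻¹ := by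
  unfold Pk; field_simp; ring

theorem Pk_int (ε x : ℝ) (hε : 0 < ε) : Integrable (Pk ε x) := by
  have h : Pk ε x = fun y => ε⁻¹ * (1 + ((y - x) / ε) ^ 2)⁻¹ := funext fun y => Pk_eq ε x y hε
  rw [h]
  exact ((integrable_inv_one_add_sq.comp_div hε.ne').comp_sub_right x).const_mul _

theorem Pk_integral (ε x : ℝ) (hε : 0 < ε) : ∫ y, Pk ε x y = Real.pi := by
  simp_rw [Pk_eq ε x _ hε]
  rw [integral_const_mul, integral_sub_right_eq_self (fun y => (1 + (y / ε) ^ 2)⁻¹) x,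
    Measure.integral_comp_div (fun y => (1 + y ^ 2)⁻¹) ε, integral_univ_inv_one_add_sq, abs_of_pos hε,
    smul_eq_mul]
  field_simp

theorem Pk_cont (ε x : ℝ) (hε : 0 < ε) : Continuous (Pk ε x) := by
  unfold Pk
  exact Continuous.div (by fun_prop) (by fun_prop) (fun s => by positivity)

theorem Pk_le (ε x y : ℝ) (hε : 0 < ε) : Pk ε x y ≤ ε⁻¹ := by
  rw [Pk_eq _ _ _ hε]
  have : (1 + ((y - x) / ε) ^ 2)⁻¹ ≤ 1 := inv_le_one_of_one_le₀ (by nlinarith [sq_nonneg ((y-x)/ε)])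
  have : 0 ≤ ε⁻¹ := by positivity
  nlinarith

theorem fPk_int (f : ℝ → ℝ) (hf : Integrable f) (ε x : ℝ) (hε : 0 < ε) :
    Integrable fun y => f y * Pk ε x y :=
  Integrable.mul_bdd (c := ε⁻¹) hf (Pk_cont ε x hε).aestronglyMeasurable
    (Eventually.of_forall fun y => by
      rw [Real.norm_of_nonneg (Pk_nonneg _ _ _ hε)]; exact Pk_le _ _ _ hε)

theorem fcPk_int (f : ℝ → ℝ) (hf : Integrable f) (c ε x : ℝ) (hε : 0 < ε) :
    Integrable fun y => (f y - c) * Pk ε x y := by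
  simp_rw [sub_mul]
  exact (fPk_int f hf ε x hε).sub ((Pk_int ε x hε).const_mul c)

theorem Pk_dyadic (ε x y : ℝ) (hε : 0 < ε) :
    ∃ k : ℕ, |y - x| ≤ 2 ^ k * ε ∧ Pk ε x y ≤ 4 * (4⁻¹) ^ k / ε := by
  have hex : ∃ k : ℕ, |y - x| ≤ 2 ^ k * ε := by
    obtain ⟨k, hk⟩ := pow_unbounded_of_one_lt (|y - x| / ε) (one_lt_two)
    exact ⟨k, by rw [div_lt_iff₀ hε] at hk; exact hk.le⟩
  classical
  refine ⟨Nat.find hex, Nat.find_spec hex, ?_⟩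
  rcases h : Nat.find hex with _ | k
  · have := Pk_le ε x y hε
    rw [pow_zero, mul_one, div_eq_mul_inv]
    have : 0 ≤ ε⁻¹ := by positivity
    linarith
  · have h1 : ¬ (|y - x| ≤ 2 ^ k * ε) := Nat.find_min hex (by omega)
    push Not at h1
    unfold Pk
    rw [div_le_div_iff₀ (by positivity) hε]
    have h2 : (2 ^ k * ε) ^ 2 < (y - x) ^ 2 := by
      rw [← sq_abs (y - x)]; gcongr
    have h3 : (4:ℝ) * 4⁻¹ ^ (k+1) = 4⁻¹ ^ k := by rw [pow_succ]; ring
    rw [h3]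
    have h4 : (4:ℝ)⁻¹ ^ k * (2 ^ k * ε) ^ 2 = ε ^ 2 := by
      rw [mul_pow, ← pow_mul, mul_comm k 2, pow_mul, ← mul_assoc, ← mul_pow]; norm_num
    have h5 : (0:ℝ) < 4⁻¹ ^ k := by positivity
    nlinarith

theorem leb_bound (f : ℝ → ℝ) (hf : Integrable f) (x c : ℝ) (ε : ℝ) (hε : 0 < ε) (C : ℝ)
    (hC : ∀ r, 0 < r → (∫ y in Metric.closedBall x r, |f y - c|) / r ≤ C) :
    ∫ y, |f y - c| * Pk ε x y ≤
      ∑' k : ℕ, 4 * (2⁻¹ : ℝ) ^ k * ((∫ y in Metric.closedBall x (2 ^ k * ε), |f y - c|) / (2 ^ k * ε)) := by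
  have hCnn : ∀ r, 0 < r → 0 ≤ (∫ y in Metric.closedBall x r, |f y - c|) / r := fun r hr =>
    div_nonneg (integral_nonneg fun y => abs_nonneg _) hr.le
  have hsum : Summable fun k : ℕ => 4 * (2⁻¹ : ℝ) ^ k * ((∫ y in Metric.closedBall x (2 ^ k * ε), |f y - c|) / (2 ^ k * ε)) := by
    apply Summable.of_nonneg_of_le (f := fun k : ℕ => 4 * (2⁻¹ : ℝ) ^ k * C)
    · intro k; have := hCnn (2 ^ k * ε) (by positivity); positivity
    · intro k; have := hC (2 ^ k * ε) (by positivity); gcongr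
    · exact ((summable_geometric_of_lt_one (by norm_num) (by norm_num)).mul_left 4).mul_right C
  have hnn : ∀ k : ℕ, 0 ≤ 4 * (2⁻¹ : ℝ) ^ k * ((∫ y in Metric.closedBall x (2 ^ k * ε), |f y - c|) / (2 ^ k * ε)) := by
    intro k; have := hCnn (2 ^ k * ε) (by positivity); positivity
  have hli : ∀ r, IntegrableOn (fun y => |f y - c|) (Metric.closedBall x r) := fun r =>
    ((hf.integrableOn).sub (integrableOn_const measure_closedBall_lt_top.ne)).abs
  have hm : AEMeasurable (fun y => ENNReal.ofReal |f y - c|) := by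
    have := hf.aestronglyMeasurable.aemeasurable
    fun_prop
  have key : ENNReal.ofReal (∫ y, |f y - c| * Pk ε x y) ≤ ENNReal.ofReal (∑' k : ℕ, 4 * (2⁻¹ : ℝ) ^ k * ((∫ y in Metric.closedBall x (2 ^ k * ε), |f y - c|) / (2 ^ k * ε))) := by
    rw [ofReal_integral_eq_lintegral_ofReal, ENNReal.ofReal_tsum_of_nonneg hnn hsum]
    · calc _ ≤ ∫⁻ y, ∑' k : ℕ, ENNReal.ofReal (4 * 4⁻¹ ^ k / ε) * (Metric.closedBall x (2 ^ k * ε)).indicator (fun y => ENNReal.ofReal |f y - c|) y := by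
            apply lintegral_mono
            intro y
            obtain ⟨k, hk1, hk2⟩ := Pk_dyadic ε x y hε
            refine le_trans ?_ (ENNReal.le_tsum k)
            rw [indicator_of_mem (by rw [Metric.mem_closedBall, Real.dist_eq]; exact hk1), ← ENNReal.ofReal_mul (by positivity), mul_comm]
            apply ENNReal.ofReal_le_ofReal
            gcongr
        _ = ∑' k : ℕ, ENNReal.ofReal (4 * 4⁻¹ ^ k / ε) * ∫⁻ y in Metric.closedBall x (2 ^ k * ε), ENNReal.ofReal |f y - c| := by
            rw [lintegral_tsum]
            · congr 1; ext k
              rw [lintegral_const_mul' _ _ ENNReal.ofReal_ne_top, lintegral_indicator measurableSet_closedBall]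
            · intro k
              exact (hm.indicator measurableSet_closedBall).const_mul _
        _ = _ := by
            congr 1; ext k
            rw [← ofReal_integral_eq_lintegral_ofReal (hli _) (Eventually.of_forall fun y => abs_nonneg _),
              ← ENNReal.ofReal_mul (by positivity)]
            congr 1
            have : (4⁻¹ : ℝ) ^ k = 2⁻¹ ^ k * 2⁻¹ ^ k := by rw [← mul_pow]; norm_num
            rw [this]
            rw [inv_pow]
            field_simp
    · have := (fcPk_int f hf c ε x hε).abs
      refine this.congr (Eventually.of_forall fun y => ?_)
      simp only [abs_mul, abs_of_nonneg (Pk_nonneg ε x y hε)]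
    · exact Eventually.of_forall fun y => mul_nonneg (abs_nonneg _) (Pk_nonneg _ _ _ hε)
  exact (ENNReal.ofReal_le_ofReal_iff (tsum_nonneg hnn)).mp key

theorem leb_pt (f : ℝ → ℝ) (hf : Integrable f) :
    ∀ᵐ x, Tendsto (fun ε => ∫ y, |f y - f x| * Pk ε x y) (nhdsWithin 0 (Ioi 0)) (nhds 0) := by
  filter_upwards [IsUnifLocDoublingMeasure.ae_tendsto_average_norm_sub volume hf.locallyIntegrable 1] with x hx
  have h1 := hx (l := nhdsWithin 0 (Ioi 0)) (fun _ => x) (fun r => r) tendsto_id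
    (by filter_upwards [self_mem_nhdsWithin] with r hr
        rw [one_mul, Metric.mem_closedBall, dist_self]; exact (le_of_lt hr))
  set ψ : ℝ → ℝ := fun r => (∫ y in Metric.closedBall x r, |f y - f x|) / r with hψ
  have hψ0 : Tendsto ψ (nhdsWithin 0 (Ioi 0)) (nhds 0) := by
    have h2 := h1.const_mul 2
    rw [mul_zero] at h2
    refine h2.congr' ?_
    filter_upwards [self_mem_nhdsWithin] with r hr
    have hr' : 0 < r := hr
    rw [setAverage_eq, measureReal_def, Real.volume_closedBall, ENNReal.toReal_ofReal (by positivity), smul_eq_mul, hψ]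
    simp only [Real.norm_eq_abs]
    field_simp
  have hψnn : ∀ r, 0 < r → 0 ≤ ψ r := fun r hr => div_nonneg (integral_nonneg fun y => abs_nonneg _) hr.le
  obtain ⟨C, hC⟩ : ∃ C, ∀ r, 0 < r → ψ r ≤ C := by
    have h3 : ∀ᶠ r in nhdsWithin 0 (Ioi 0), ψ r < 1 := hψ0.eventually_lt_const one_pos
    obtain ⟨δ, hδ, hδ2⟩ := mem_nhdsGT_iff_exists_Ioo_subset.mp h3
    have hδ' : 0 < δ := hδ
    refine ⟨max 1 ((∫ y, |f y|) / δ + 2 * |f x|), fun r hr => ?_⟩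
    by_cases hrd : r < δ
    · exact (le_of_lt (hδ2 ⟨hr, hrd⟩)).trans (le_max_left _ _)
    · push Not at hrd
      refine le_trans ?_ (le_max_right _ _)
      have hi : IntegrableOn (fun _ : ℝ => |f x|) (Metric.closedBall x r) := integrableOn_const measure_closedBall_lt_top.ne
      have h4 : ∫ y in Metric.closedBall x r, |f y - f x| ≤ (∫ y, |f y|) + 2 * r * |f x| := by
        calc _ ≤ ∫ y in Metric.closedBall x r, (|f y| + |f x|) := by
              apply integral_mono
              · exact ((hf.integrableOn).sub (integrableOn_const measure_closedBall_lt_top.ne)).abs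
              · exact hf.abs.integrableOn.add hi
              · intro y; exact abs_sub _ _
          _ = (∫ y in Metric.closedBall x r, |f y|) + ∫ y in Metric.closedBall x r, |f x| :=
              integral_add hf.abs.integrableOn hi
          _ ≤ _ := by
              apply add_le_add
              · exact setIntegral_le_integral hf.abs (Eventually.of_forall fun y => abs_nonneg _)
              · rw [setIntegral_const, measureReal_def, Real.volume_closedBall, ENNReal.toReal_ofReal (by positivity), smul_eq_mul]
      have h5 : 0 ≤ ∫ y, |f y| := integral_nonneg fun y => abs_nonneg _
      rw [hψ]; simp only
      rw [div_le_iff₀ hr]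
      have h6 : (∫ y, |f y|) ≤ (∫ y, |f y|) / δ * r := by
        rw [div_mul_eq_mul_div, le_div_iff₀ hδ']; gcongr
      linarith
  have hT : Tendsto (fun ε => ∑' k : ℕ, 4 * (2⁻¹ : ℝ) ^ k * ψ (2 ^ k * ε)) (nhdsWithin 0 (Ioi 0)) (nhds (∑' k : ℕ, 4 * (2⁻¹ : ℝ) ^ k * 0)) := by
    apply tendsto_tsum_of_dominated_convergence (bound := fun k : ℕ => 4 * (2⁻¹ : ℝ) ^ k * C)
    · exact ((summable_geometric_of_lt_one (by norm_num) (by norm_num)).mul_left 4).mul_right C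
    · intro k
      apply Tendsto.const_mul
      apply hψ0.comp
      apply tendsto_nhdsWithin_iff.mpr
      constructor
      · have : Tendsto (fun ε : ℝ => 2 ^ k * ε) (nhds 0) (nhds (2 ^ k * 0)) := tendsto_id.const_mul _
        rw [mul_zero] at this
        exact this.mono_left nhdsWithin_le_nhds
      · filter_upwards [self_mem_nhdsWithin] with r hr
        have : 0 < r := hr
        simp; positivity
    · filter_upwards [self_mem_nhdsWithin] with r hr k
      have hr' : 0 < r := hr
      have h7 := hψnn (2 ^ k * r) (by positivity)
      have h8 := hC (2 ^ k * r) (by positivity)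
      rw [Real.norm_of_nonneg (by positivity)]
      gcongr
  simp only [mul_zero, tsum_zero] at hT
  refine squeeze_zero' ?_ ?_ hT
  · filter_upwards [self_mem_nhdsWithin] with r hr
    exact integral_nonneg fun y => mul_nonneg (abs_nonneg _) (Pk_nonneg _ _ _ hr)
  · filter_upwards [self_mem_nhdsWithin] with r hr
    exact leb_bound f hf x (f x) r hr C hC

/-- Difference of the conjugate Poisson kernel and the truncated Hilbert kernel. -/
def Kq (ε u : ℝ) : ℝ := u / (u ^ 2 + ε ^ 2) - {u : ℝ | ε ≤ |u|}.indicator (fun u => u⁻¹) u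

theorem Kq_odd (ε u : ℝ) : Kq ε (-u) = -Kq ε u := by
  unfold Kq
  by_cases h : ε ≤ |u|
  · rw [indicator_of_mem (by simpa using h), indicator_of_mem (by simpa using h)]
    rw [inv_neg, neg_sq]; ring
  · rw [indicator_of_notMem (by simpa using h), indicator_of_notMem (by simpa using h)]
    rw [neg_sq]; ring

theorem Kq_meas (ε : ℝ) : Measurable (Kq ε) := by
  unfold Kq
  apply Measurable.sub (by fun_prop)
  apply Measurable.indicator (by fun_prop)
  exact measurableSet_le measurable_const (by fun_prop)

theorem Kq_le (ε x y : ℝ) (hε : 0 < ε) : |Kq ε (y - x)| ≤ Pk ε x y := by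
  unfold Kq Pk
  set u := y - x
  by_cases h : ε ≤ |u|
  · have hu : u ≠ 0 := by rintro h0; rw [h0, abs_zero] at h; linarith
    rw [indicator_of_mem (by simpa using h)]
    have e : u / (u ^ 2 + ε ^ 2) - u⁻¹ = -(ε ^ 2 / (u * (u ^ 2 + ε ^ 2))) := by field_simp; ring
    rw [e, abs_neg, abs_div, abs_mul, abs_of_pos (by positivity : 0 < ε ^ 2), abs_of_pos (by positivity : 0 < u ^ 2 + ε ^ 2)]
    have hu' : 0 < |u| := abs_pos.mpr hu
    rw [div_le_div_iff₀ (by positivity) (by positivity)]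
    have : ε ^ 2 ≤ ε * |u| := by nlinarith
    have h2 : 0 < u ^ 2 + ε ^ 2 := by positivity
    nlinarith
  · rw [indicator_of_notMem (by simpa using h), sub_zero, abs_div, abs_of_pos (by positivity : 0 < u ^ 2 + ε ^ 2)]
    push Not at h
    gcongr

theorem Kq_int (ε x : ℝ) (hε : 0 < ε) : Integrable fun y => Kq ε (y - x) :=
  (Pk_int ε x hε).mono' ((Kq_meas ε).comp (measurable_id.sub_const x)).aestronglyMeasurable
    (Eventually.of_forall fun y => Kq_le ε x y hε)

theorem Kq_integral (ε x : ℝ) : ∫ y, Kq ε (y - x) = 0 := by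
  rw [integral_sub_right_eq_self (Kq ε) x]
  have h := integral_neg_eq_self (Kq ε) volume
  simp_rw [Kq_odd] at h
  rw [integral_neg] at h
  linarith

theorem bdry (f : ℝ → ℝ) (hf : Integrable f) (hf0 : ∀ x, 0 ≤ f x) :
    ∀ᵐ x : ℝ, ∃ w : ℂ, Tendsto (fun y : ℝ => Wf f (x + y * Complex.I)) (nhdsWithin 0 (Ioi 0)) (nhds w) ∧
      w.re = 1 + f x ∧
      Tendsto (fun ε : ℝ => Real.pi⁻¹ * ∫ y in {y : ℝ | ε ≤ |y - x|}, f y / (y - x))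
        (nhdsWithin 0 (Ioi 0)) (nhds (-w.im)) := by
  filter_upwards [W_lim f hf hf0, leb_pt f hf] with x hx hleb
  obtain ⟨w, hw⟩ := hx
  have hπ := Real.pi_pos
  refine ⟨w, hw, ?_, ?_⟩
  · have h1 := (Complex.continuous_re.tendsto w).comp hw
    refine tendsto_nhds_unique h1 ?_
    have h2 : Tendsto (fun ε => ∫ y, (f y - f x) * Pk ε x y) (nhdsWithin 0 (Ioi 0)) (nhds 0) := by
      refine squeeze_zero_norm' ?_ hleb
      filter_upwards [self_mem_nhdsWithin] with ε hε
      refine (norm_integral_le_integral_norm _).trans (le_of_eq ?_)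
      congr 1; ext y
      rw [norm_mul, Real.norm_eq_abs, Real.norm_of_nonneg (Pk_nonneg ε x y hε)]
    have h3 := ((h2.const_mul Real.pi⁻¹).const_add (f x)).const_add 1
    simp only [mul_zero, add_zero] at h3
    refine h3.congr' ?_
    filter_upwards [self_mem_nhdsWithin] with ε hε
    have hε' : 0 < ε := hε
    simp only [Function.comp]
    rw [W_re f hf _ (by simpa using hε')]
    simp only [sub_mul]
    rw [integral_sub (fPk_int f hf ε x hε) ((Pk_int ε x hε).const_mul _), integral_const_mul, Pk_integral ε x hε]
    have e : (fun y => f y * (((x : ℂ) + ε * Complex.I).im / ((y - ((x : ℂ) + ε * Complex.I).re) ^ 2 + ((x : ℂ) + ε * Complex.I).im ^ 2))) = fun y => f y * Pk ε x y := by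
      ext y; simp [Pk]
    rw [e]
    field_simp; ring
  · have h1 := (Complex.continuous_im.tendsto w).comp hw
    have h2 : Tendsto (fun ε => ∫ y, (f y - f x) * Kq ε (y - x)) (nhdsWithin 0 (Ioi 0)) (nhds 0) := by
      refine squeeze_zero_norm' ?_ hleb
      filter_upwards [self_mem_nhdsWithin] with ε hε
      apply norm_integral_le_of_norm_le
      · have := (fcPk_int f hf (f x) ε x hε).abs
        refine this.congr (Eventually.of_forall fun y => ?_)
        simp only [abs_mul, abs_of_nonneg (Pk_nonneg ε x y hε)]
      · refine Eventually.of_forall fun y => ?_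
        rw [norm_mul, Real.norm_eq_abs, Real.norm_eq_abs]
        gcongr
        exact Kq_le ε x y hε
    have h3 := h1.neg.sub (h2.const_mul Real.pi⁻¹)
    simp only [mul_zero, sub_zero] at h3
    refine h3.congr' ?_
    filter_upwards [self_mem_nhdsWithin] with ε hε
    have hε' : 0 < ε := hε
    simp only [Function.comp]
    rw [W_im f hf _ (by simpa using hε')]
    have hfK : Integrable fun y => f y * Kq ε (y - x) := by
      apply (fPk_int f hf ε x hε).mono'
      · exact hf.aestronglyMeasurable.mul (Kq_int ε x hε).aestronglyMeasurable
      · refine Eventually.of_forall fun y => ?_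
        rw [norm_mul, Real.norm_of_nonneg (hf0 y), Real.norm_eq_abs]
        exact mul_le_mul_of_nonneg_left (Kq_le ε x y hε) (hf0 y)
    have hS : MeasurableSet {y : ℝ | ε ≤ |y - x|} := measurableSet_le measurable_const (by fun_prop)
    have hfI : Integrable ({y : ℝ | ε ≤ |y - x|}.indicator fun y => f y / (y - x)) := by
      apply (hf.mul_const ε⁻¹).mono'
      · apply AEStronglyMeasurable.indicator _ hS
        apply AEStronglyMeasurable.div₀ hf.aestronglyMeasurable
        fun_prop
      · refine Eventually.of_forall fun y => ?_
        by_cases hy : ε ≤ |y - x|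
        · rw [indicator_of_mem (by simpa using hy), norm_div, Real.norm_of_nonneg (hf0 y), Real.norm_eq_abs, div_eq_mul_inv]
          gcongr
          exact hf0 y
        · rw [indicator_of_notMem (by simpa using hy), norm_zero]
          have := hf0 y; positivity
    simp only [sub_mul]
    rw [integral_sub hfK ((Kq_int ε x hε).const_mul _), integral_const_mul, Kq_integral, ← integral_indicator hS]
    have e : ∀ y, f y * ((y - x) / ((y - x) ^ 2 + ε ^ 2)) = f y * Kq ε (y - x) + {y : ℝ | ε ≤ |y - x|}.indicator (fun y => f y / (y - x)) y := by
      intro y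
      unfold Kq
      by_cases hy : ε ≤ |y - x|
      · rw [indicator_of_mem (by simpa using hy), indicator_of_mem (by simpa using hy)]; ring
      · rw [indicator_of_notMem (by simpa using hy), indicator_of_notMem (by simpa using hy)]; ring
    simp only [Complex.add_re, Complex.ofReal_re, Complex.mul_re, Complex.I_re, Complex.I_im, Complex.add_im, Complex.ofReal_im, Complex.mul_im, mul_zero, mul_one, add_zero, zero_add, sub_zero, e]
    rw [integral_add hfK hfI]
    ring

theorem mv_int (H : ℂ → ℂ) (η B : ℝ) (hη : 0 < η)
    (hd : ∀ z : ℂ, 0 < z.im → DifferentiableAt ℂ H z)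
    (hb : ∀ z : ℂ, η ≤ z.im → ‖H z‖ ≤ B) :
    Integrable (fun x : ℝ => H (x + η * Complex.I)) om :=
  Integrable.of_bound (cont_line H hd η hη).aestronglyMeasurable B
    (Eventually.of_forall fun x => hb _ (by simp))

theorem mv_re (H : ℂ → ℂ) (η B : ℝ) (hη : 0 < η)
    (hd : ∀ z : ℂ, 0 < z.im → DifferentiableAt ℂ H z)
    (hb : ∀ z : ℂ, η ≤ z.im → ‖H z‖ ≤ B) :
    Integrable (fun x : ℝ => (H (x + η * Complex.I)).re) om ∧
    ∫ x : ℝ, (H (x + η * Complex.I)).re ∂om = Real.pi * (H ((1 + η) * Complex.I)).re := by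
  have hi := mv_int H η B hη hd hb
  refine ⟨hi.re, ?_⟩
  have h := Complex.reCLM.integral_comp_comm hi
  simp only [Complex.reCLM_apply] at h
  rw [h, mv H η B hη hd hb]
  simp

theorem fatou_L1 (μ : Measure ℝ) (g : ℕ → ℝ → ℝ) (h : ℝ → ℝ) (K : ℝ)
    (hg : ∀ n, Integrable (g n) μ) (hK : ∀ n, ∫ x, |g n x| ∂μ ≤ K)
    (hl : ∀ᵐ x ∂μ, Tendsto (fun n => g n x) atTop (nhds (h x))) :
    Integrable h μ ∧ ∫ x, |h x| ∂μ ≤ K := by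
  have hm : AEStronglyMeasurable h μ :=
    aestronglyMeasurable_of_tendsto_ae atTop (fun n => (hg n).1) hl
  have hle : ∀ n, ∫⁻ x, ‖g n x‖ₑ ∂μ ≤ ENNReal.ofReal K := by
    intro n
    rw [← ofReal_integral_norm_eq_lintegral_enorm (hg n)]
    exact ENNReal.ofReal_le_ofReal (hK n)
  have h1 : ∫⁻ x, ‖h x‖ₑ ∂μ ≤ ENNReal.ofReal K := by
    calc ∫⁻ x, ‖h x‖ₑ ∂μ = ∫⁻ x, liminf (fun n => ‖g n x‖ₑ) atTop ∂μ := by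
          apply lintegral_congr_ae
          filter_upwards [hl] with x hx
          exact (hx.enorm.liminf_eq).symm
      _ ≤ liminf (fun n => ∫⁻ x, ‖g n x‖ₑ ∂μ) atTop :=
          lintegral_liminf_le' (fun n => (hg n).1.enorm)
      _ ≤ ENNReal.ofReal K := by
          exact liminf_le_of_frequently_le' (Frequently.of_forall hle)
  have hi : Integrable h μ := ⟨hm, lt_of_le_of_lt h1 ENNReal.ofReal_lt_top⟩
  refine ⟨hi, ?_⟩
  have hK0 : 0 ≤ K := (integral_nonneg fun x => abs_nonneg _).trans (hK 0)
  have h2 := ofReal_integral_norm_eq_lintegral_enorm hi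
  rw [← h2] at h1
  exact (ENNReal.ofReal_le_ofReal_iff hK0).mp h1

theorem s_ineq (s : ℝ) (hs : 0 ≤ s) :
    s / 2 ≤ 2 + s * Real.arctan s - Real.log (1 + s ^ 2) / 2 := by
  have hpi := Real.pi_gt_d2
  by_cases h1 : s ≤ 1
  · have h2 : Real.log (1 + s ^ 2) ≤ s ^ 2 := by
      have := Real.log_le_sub_one_of_pos (by positivity : 0 < 1 + s ^ 2); linarith
    have h3 : 0 ≤ s * Real.arctan s := mul_nonneg hs (Real.arctan_nonneg.mpr hs)
    nlinarith
  · push Not at h1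
    have h2 : Real.pi / 4 ≤ Real.arctan s := by
      rw [← Real.arctan_one]; exact Real.arctan_mono h1.le
    have h3 : Real.log (1 + s ^ 2) ≤ 2 * Real.log (1 + s) := by
      rw [← Real.log_rpow (by linarith)]
      apply Real.log_le_log (by positivity)
      norm_num
      nlinarith
    have h4 : Real.log (1 + s) ≤ Real.log 4 + (1 + s) / 4 - 1 := by
      have := Real.log_le_sub_one_of_pos (by positivity : 0 < (1 + s) / 4)
      rw [Real.log_div (by positivity) (by norm_num)] at this
      linarith
    have h5 : Real.log 4 ≤ 1.39 := by
      have : Real.log 4 = 2 * Real.log 2 := by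
        rw [show (4:ℝ) = 2 ^ 2 by norm_num, Real.log_pow]; norm_num
      rw [this]; linarith [Real.log_two_lt_d9]
    nlinarith

theorem arg_arctan (w : ℂ) (hw : 0 < w.re) : Complex.arg w = Real.arctan (w.im / w.re) := by
  have h := abs_lt.mp (Complex.abs_arg_lt_pi_div_two_iff.mpr (Or.inl hw))
  rw [← Complex.tan_arg, Real.arctan_tan h.1 h.2]

theorem wlog_re (w : ℂ) : (w * Complex.log w).re = w.re * Real.log ‖w‖ - w.im * Complex.arg w := by
  rw [Complex.mul_re, Complex.log_re, Complex.log_im]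

theorem pt_ineq (w : ℂ) (hw : 1 ≤ w.re) :
    |w.im| / 2 ≤ w.re * Real.log w.re + 2 * w.re - (w * Complex.log w).re := by
  have hu : 0 < w.re := by linarith
  rw [wlog_re, arg_arctan w hu]
  set u := w.re
  set v := w.im
  set s := |v| / u with hs
  have hv : |v| = s * u := by rw [hs]; field_simp
  have e1 : v * Real.arctan (v / u) = |v| * Real.arctan s := by
    rcases le_total 0 v with h | h
    · rw [hs, abs_of_nonneg h]
    · rw [hs, abs_of_nonpos h, neg_div, Real.arctan_neg]; ring
  have e2 : Real.log ‖w‖ = Real.log u + Real.log (1 + s ^ 2) / 2 := by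
    have : ‖w‖ ^ 2 = u ^ 2 * (1 + s ^ 2) := by
      rw [← Complex.normSq_eq_norm_sq, Complex.normSq_apply]
      change u * u + v * v = _
      have : v * v = (s * u) ^ 2 := by rw [← hv, sq_abs]; ring
      rw [this]; ring
    have h2 := congrArg Real.log this
    rw [Real.log_mul (by positivity) (by positivity), Real.log_pow, Real.log_pow] at h2
    push_cast at h2
    linarith
  rw [e1, e2, hv]
  have := s_ineq s (by positivity)
  nlinarith

theorem jensen (f : ℝ → ℝ) (hf : Integrable f) (hf0 : ∀ x, 0 ≤ f x)
    (hF : Integrable fun x => (1 + f x) * Real.log (1 + f x)) (x η : ℝ) (hη : 0 < η) :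
    (Wf f (x + η * Complex.I)).re * Real.log (Wf f (x + η * Complex.I)).re ≤
      (Wf (fun x => (1 + f x) * Real.log (1 + f x)) (x + η * Complex.I)).re - 1 := by
  have h1 := W_re_ge f hf hf0 (x + η * Complex.I) (by simpa using hη)
  have ef : ∀ g : ℝ → ℝ, Integrable g → (Wf g (x + η * Complex.I)).re = 1 + Real.pi⁻¹ * ∫ y, g y * Pk η x y := by
    intro g hg
    rw [W_re g hg _ (by simpa using hη)]
    have e : (fun y => g y * (((x : ℂ) + η * Complex.I).im / ((y - ((x : ℂ) + η * Complex.I).re) ^ 2 + ((x : ℂ) + η * Complex.I).im ^ 2))) = fun y => g y * Pk η x y := by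
      ext y; simp [Pk]
    rw [e]
  have e1 := ef f hf
  have e2 := ef _ hF
  set u := (Wf f (x + η * Complex.I)).re
  have hu : 0 < u := by linarith
  have hpi := Real.pi_pos
  have e3 : ∫ y, f y * Pk η x y = Real.pi * u - Real.pi := by
    rw [e1]; field_simp; ring
  have i1 := fPk_int f hf η x hη
  have i2 := fPk_int _ hF η x hη
  have i3 := Pk_int η x hη
  have i4 : Integrable fun y => (1 + f y) * Real.log (1 + f y) * Pk η x y - f y * Pk η x y := i2.sub i1
  have key : ∫ y, (Real.log u * (f y * Pk η x y) + Real.log u * Pk η x y) ≤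
      ∫ y, ((1 + f y) * Real.log (1 + f y) * Pk η x y - f y * Pk η x y + (u - 1) * Pk η x y) := by
    apply integral_mono ((i1.const_mul _).add (i3.const_mul _)) ((i2.sub i1).add (i3.const_mul _))
    intro y
    have hy := hf0 y
    have hp := Pk_nonneg η x y hη
    have h3 : (1 + f y) * Real.log u ≤ (1 + f y) * Real.log (1 + f y) - (1 + f y) + u := by
      have := Real.log_le_sub_one_of_pos (by positivity : 0 < u / (1 + f y))
      rw [Real.log_div hu.ne' (by positivity)] at this
      have h4 := mul_le_mul_of_nonneg_left this (by positivity : 0 ≤ 1 + f y)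
      have h5 : (1 + f y) * (u / (1 + f y) - 1) = u - (1 + f y) := by field_simp
      rw [h5] at h4
      linarith
    simp only [Pi.add_apply, Pi.sub_apply]
    nlinarith [mul_le_mul_of_nonneg_right h3 hp]
  rw [integral_add (i1.const_mul _) (i3.const_mul _), integral_add i4 (i3.const_mul _),
    integral_sub i2 i1, integral_const_mul, integral_const_mul, integral_const_mul, Pk_integral η x hη, e3] at key
  rw [e2]
  rw [add_sub_cancel_left, inv_mul_eq_div, le_div_iff₀ hpi]
  nlinarith

theorem wlog_bd (f : ℝ → ℝ) (hf : Integrable f) (hf0 : ∀ x, 0 ≤ f x) (z : ℂ) (d : ℝ) (hd : 0 < d)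
    (h : d ≤ z.im) : ‖Wf f z * Complex.log (Wf f z)‖ ≤ (1 + (∫ x, f x) / d) * (Real.log (1 + (∫ x, f x) / d) + Real.pi) := by
  have h1 := W_norm' f hf hf0 z d hd h
  have h2 := W_norm_ge f hf hf0 z (by linarith)
  rw [norm_mul]
  have h3 := norm_log_le _ h2
  have h4 : Real.log ‖Wf f z‖ ≤ Real.log (1 + (∫ x, f x) / d) := Real.log_le_log (by linarith) h1
  have : 0 ≤ Real.pi := Real.pi_pos.le
  apply mul_le_mul h1 (by linarith) (norm_nonneg _) (by linarith)

theorem stepF (f : ℝ → ℝ) (hf : Integrable f) (hf0 : ∀ x, 0 ≤ f x)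
    (hF : Integrable fun x => (1 + f x) * Real.log (1 + f x)) (g : ℝ → ℝ)
    (hg : ∀ᵐ x : ℝ, Tendsto (fun n => (Wf f (x + et n * Complex.I)).im) atTop (nhds (g x))) :
    Integrable g om := by
  set F := fun x => (1 + f x) * Real.log (1 + f x) with hFd
  have hF0 : ∀ x, 0 ≤ F x := fun x =>
    mul_nonneg (by linarith [hf0 x]) (Real.log_nonneg (by linarith [hf0 x]))
  have hpi := Real.pi_pos
  set M := ∫ x, f x
  have hM : 0 ≤ M := integral_nonneg hf0
  set N := ∫ x, F x
  refine (fatou_L1 om (fun n x => (Wf f (x + et n * Complex.I)).im) g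
    (2 * (Real.pi * (1 + N) + 2 * (Real.pi * (1 + M)) + Real.pi * ((1 + M) * (Real.log (1 + M) + Real.pi)))) ?_ ?_ (om_ac hg)).1
  · intro n
    exact (mv_int (Wf f) (et n) _ (et_pos n) (fun z hz => W_diff f hf z hz)
      (fun z hz => W_norm' f hf hf0 z (et n) (et_pos n) hz)).im
  · intro n
    set η := et n
    have hη : 0 < η := et_pos n
    have iv : Integrable (fun x : ℝ => (Wf f (x + η * Complex.I)).im) om :=
      (mv_int (Wf f) η _ hη (fun z hz => W_diff f hf z hz)
      (fun z hz => W_norm' f hf hf0 z η hη hz)).im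
    obtain ⟨i1, q1⟩ := mv_re (Wf f) η _ hη (fun z hz => W_diff f hf z hz)
      (fun z hz => W_norm' f hf hf0 z η hη hz)
    obtain ⟨i2, q2⟩ := mv_re (Wf F) η _ hη (fun z hz => W_diff F hF z hz)
      (fun z hz => W_norm' F hF hF0 z η hη hz)
    obtain ⟨i3, q3⟩ := mv_re (fun z => Wf f z * Complex.log (Wf f z)) η _ hη
      (fun z hz => (W_diff f hf z hz).mul (W_log_diff f hf hf0 z hz))
      (fun z hz => wlog_bd f hf hf0 z η hη hz)
    have hz1 : (1:ℝ) ≤ ((1 + (η:ℂ)) * Complex.I).im := by simp [hη.le]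
    have b1 : (Wf f ((1 + η) * Complex.I)).re ≤ 1 + M := by
      have := W_norm' f hf hf0 _ 1 one_pos hz1
      rw [div_one] at this
      exact (Complex.re_le_norm _).trans this
    have b2 : (Wf F ((1 + η) * Complex.I)).re ≤ 1 + N := by
      have := W_norm' F hF hF0 _ 1 one_pos hz1
      rw [div_one] at this
      exact (Complex.re_le_norm _).trans this
    have b3 : -(Wf f ((1 + η) * Complex.I) * Complex.log (Wf f ((1 + η) * Complex.I))).re ≤ (1 + M) * (Real.log (1 + M) + Real.pi) := by
      have := wlog_bd f hf hf0 _ 1 one_pos hz1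
      rw [div_one] at this
      exact (neg_le_abs _).trans ((Complex.abs_re_le_norm _).trans this)
    have key : ∫ x : ℝ, |(Wf f (x + η * Complex.I)).im| / 2 ∂om ≤
      ∫ x : ℝ, ((Wf F (x + η * Complex.I)).re + 2 * (Wf f (x + η * Complex.I)).re - (Wf f (x + η * Complex.I) * Complex.log (Wf f (x + η * Complex.I))).re) ∂om := by
      apply integral_mono (iv.abs.div_const 2) ((i2.add (i1.const_mul 2)).sub i3)
      intro x
      have h1 := pt_ineq _ (W_re_ge f hf hf0 (x + η * Complex.I) (by simpa using hη))
      have h2 := jensen f hf hf0 hF x η hη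
      simp only [Pi.add_apply, Pi.sub_apply]
      linarith
    have i4 : Integrable (fun x : ℝ => (Wf F (x + η * Complex.I)).re + 2 * (Wf f (x + η * Complex.I)).re) om := i2.add (i1.const_mul 2)
    rw [integral_sub i4 i3, integral_add i2 (i1.const_mul 2), integral_const_mul, q1, q2, q3,
      integral_div] at key
    have c1 := mul_le_mul_of_nonneg_left b1 hpi.le
    have c2 := mul_le_mul_of_nonneg_left b2 hpi.le
    have c3 := mul_le_mul_of_nonneg_left b3 hpi.le
    linarith

def Vd (δ : ℝ) (w : ℂ) : ℂ := w / (1 + δ * w)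

theorem Vd_den (δ : ℝ) (hδ : 0 < δ) (w : ℂ) (hw : 1 ≤ w.re) : 0 < (1 + δ * w).re := by
  simp; positivity

theorem Vd_ne (δ : ℝ) (hδ : 0 < δ) (w : ℂ) (hw : 1 ≤ w.re) : 1 + δ * w ≠ 0 := by
  intro h
  have := Vd_den δ hδ w hw
  rw [h] at this; simp at this

theorem Vd_nsq (δ : ℝ) (w : ℂ) : ‖1 + δ * w‖ ^ 2 = (1 + δ * w.re) ^ 2 + (δ * w.im) ^ 2 := by
  rw [← Complex.normSq_eq_norm_sq, Complex.normSq_apply]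
  simp; ring

theorem Vd_den1 (δ : ℝ) (hδ : 0 < δ) (w : ℂ) (hw : 1 ≤ w.re) : 1 ≤ ‖1 + δ * w‖ := by
  have h := Vd_nsq δ w
  have h0 := norm_nonneg (1 + δ * w)
  have : 0 < δ * w.re := by positivity
  nlinarith [sq_nonneg (δ * w.im)]

theorem Vd_den2 (δ : ℝ) (hδ : 0 < δ) (w : ℂ) (hw : 1 ≤ w.re) : δ * ‖w‖ ≤ ‖1 + δ * w‖ := by
  have h := Vd_nsq δ w
  have h2 : ‖w‖ ^ 2 = w.re ^ 2 + w.im ^ 2 := by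
    rw [← Complex.normSq_eq_norm_sq, Complex.normSq_apply]; ring
  have : 0 < δ * w.re := by positivity
  refine (pow_le_pow_iff_left₀ (by positivity) (norm_nonneg _) two_ne_zero).mp ?_
  rw [h, mul_pow, h2]
  nlinarith

theorem Vd_norm_le (δ : ℝ) (hδ : 0 < δ) (w : ℂ) (hw : 1 ≤ w.re) : ‖Vd δ w‖ ≤ ‖w‖ := by
  unfold Vd; rw [norm_div]
  exact div_le_self (norm_nonneg _) (Vd_den1 δ hδ w hw)

theorem Vd_norm_le' (δ : ℝ) (hδ : 0 < δ) (w : ℂ) (hw : 1 ≤ w.re) : ‖Vd δ w‖ ≤ δ⁻¹ := by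
  unfold Vd; rw [norm_div]
  rw [div_le_iff₀ (by linarith [Vd_den1 δ hδ w hw]), inv_mul_eq_div, le_div_iff₀ hδ]
  linarith [Vd_den2 δ hδ w hw]

theorem re1_norm (w : ℂ) (hw : 1 ≤ w.re) : 1 ≤ ‖w‖ := hw.trans (Complex.re_le_norm w)

theorem Vd_norm_ge (δ : ℝ) (hδ : 0 < δ) (h1 : δ ≤ 1) (w : ℂ) (hw : 1 ≤ w.re) : 1 ≤ ‖2 * Vd δ w‖ := by
  unfold Vd; rw [norm_mul, norm_div, ← mul_div_assoc, le_div_iff₀ (by linarith [Vd_den1 δ hδ w hw])]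
  have h2 := norm_add_le (1:ℂ) (δ * w)
  rw [norm_mul, Complex.norm_of_nonneg hδ.le] at h2
  have := re1_norm w hw
  simp at h2 ⊢
  nlinarith

theorem Vd_re_pos (δ : ℝ) (hδ : 0 < δ) (w : ℂ) (hw : 1 ≤ w.re) : 0 < (Vd δ w).re := by
  unfold Vd
  rw [Complex.div_re, ← add_div]
  apply div_pos
  · simp
    have : 0 < δ * w.re := by positivity
    nlinarith [mul_self_nonneg w.im]
  · exact Complex.normSq_pos.mpr (Vd_ne δ hδ w hw)

theorem Vd_im (δ : ℝ) (w : ℂ) : (Vd δ w).im = w.im / ‖1 + δ * w‖ ^ 2 := by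
  unfold Vd
  rw [Complex.div_im, ← sub_div, ← Complex.normSq_eq_norm_sq]
  congr 1
  simp; ring

theorem Vd_im_le (δ : ℝ) (hδ : 0 < δ) (w : ℂ) (hw : 1 ≤ w.re) : |(Vd δ w).im| ≤ |w.im| := by
  rw [Vd_im, abs_div, abs_of_nonneg (by positivity : 0 ≤ ‖1 + δ * w‖ ^ 2)]
  apply div_le_self (abs_nonneg _)
  nlinarith [Vd_den1 δ hδ w hw]

theorem Vd_tendsto (w : ℂ) : Tendsto (fun n => Vd (et n) w) atTop (nhds w) := by
  unfold Vd
  have h1 : Tendsto (fun n => 1 + (et n : ℂ) * w) atTop (nhds (1 + ((0:ℝ):ℂ) * w)) :=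
    tendsto_const_nhds.add (((Complex.continuous_ofReal.tendsto 0).comp et_lim).mul_const w)
  have := (tendsto_const_nhds (x := w)).div h1 (by simp)
  simp only [Complex.ofReal_zero, zero_mul, add_zero, div_one] at this
  exact this

theorem Vd_contAt (δ : ℝ) (hδ : 0 < δ) (w : ℂ) (hw : 1 ≤ w.re) : ContinuousAt (Vd δ) w := by
  unfold Vd
  exact continuousAt_id.div (by fun_prop) (Vd_ne δ hδ w hw)

theorem Vd_meas (δ : ℝ) : Measurable (Vd δ) := by
  unfold Vd; fun_prop


theorem w_re1 (f : ℝ → ℝ) (hf : Integrable f) (hf0 : ∀ x, 0 ≤ f x) (w : ℝ → ℂ)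
  (hw : ∀ᵐ x : ℝ, Tendsto (fun n => Wf f (x + et n * Complex.I)) atTop (nhds (w x))) : ∀ᵐ x : ℝ, 1 ≤ (w x).re := by
  filter_upwards [hw] with x hx
  exact ge_of_tendsto' ((Complex.continuous_re.tendsto _).comp hx) fun n =>
    W_re_ge f hf hf0 _ (by simpa using et_pos n)

theorem w_meas (f : ℝ → ℝ) (hf : Integrable f) (_hf0 : ∀ x, 0 ≤ f x) (w : ℝ → ℂ)
  (hw : ∀ᵐ x : ℝ, Tendsto (fun n => Wf f (x + et n * Complex.I)) atTop (nhds (w x))) : AEStronglyMeasurable w om :=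
  aestronglyMeasurable_of_tendsto_ae atTop (fun n => (cont_line (Wf f) (fun z hz => W_diff f hf z hz) (et n) (et_pos n)).aestronglyMeasurable) (om_ac hw)

theorem VW_diff (f : ℝ → ℝ) (hf : Integrable f) (hf0 : ∀ x, 0 ≤ f x) (w : ℝ → ℂ)
  (_hw : ∀ᵐ x : ℝ, Tendsto (fun n => Wf f (x + et n * Complex.I)) atTop (nhds (w x))) (δ : ℝ) (hδ : 0 < δ) (z : ℂ) (hz : 0 < z.im) : DifferentiableAt ℂ (fun z => Vd δ (Wf f z)) z := by
  unfold Vd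
  have := W_diff f hf z hz
  exact this.div ((this.const_mul _).const_add _) (Vd_ne δ hδ _ (W_re_ge f hf hf0 z hz))

theorem G1 (f : ℝ → ℝ) (hf : Integrable f) (hf0 : ∀ x, 0 ≤ f x) (w : ℝ → ℂ)
  (hw : ∀ᵐ x : ℝ, Tendsto (fun n => Wf f (x + et n * Complex.I)) atTop (nhds (w x))) (E : Set ℝ) (hE : MeasurableSet E) (σ : ℝ) (hσ : |σ| = 1)
    (hs : ∀ᵐ x : ℝ, x ∉ E → 0 ≤ σ * (w x).im) (hi : IntegrableOn (fun x => (w x).im) E om) :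
    Integrable (fun x => (w x).im) om ∧
    ∫ x, |(w x).im| ∂om ≤ Real.pi * (1 + ∫ x, f x) + 2 * ∫ x in E, |(w x).im| ∂om := by
  have hpi := Real.pi_pos
  have hr := om_ac (w_re1 f hf hf0 w hw)
  have hm := w_meas f hf hf0 w hw
  have iV : ∀ n, Integrable (fun x => Vd (et n) (w x)) om := fun n =>
    Integrable.of_bound ((Vd_meas _).comp_aemeasurable hm.aemeasurable).aestronglyMeasurable (et n)⁻¹
      (by filter_upwards [hr] with x hx using Vd_norm_le' _ (et_pos n) _ hx)
  have key : Integrable (fun x => (w x).im) (om.restrict Eᶜ) ∧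
      ∫ x in Eᶜ, |(w x).im| ∂om ≤ Real.pi * (1 + ∫ x, f x) + ∫ x in E, |(w x).im| ∂om := by
    apply fatou_L1 (om.restrict Eᶜ) (fun n x => (Vd (et n) (w x)).im)
    · intro n; exact (iV n).im.integrableOn
    · intro n
      have hv := mv0 (fun z => Vd (et n) (Wf f z)) (et n)⁻¹ (fun z hz => VW_diff f hf hf0 w hw _ (et_pos n) z hz)
        (fun z hz => Vd_norm_le' _ (et_pos n) _ (W_re_ge f hf hf0 z hz)) (fun x => Vd (et n) (w x))
        (by
          filter_upwards [hw, w_re1 f hf hf0 w hw] with x hx hx1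
          exact (Vd_contAt _ (et_pos n) _ hx1).tendsto.comp hx)
      have h1 := Complex.imCLM.integral_comp_comm (iV n)
      simp only [Complex.imCLM_apply] at h1
      rw [hv] at h1
      have ii : Integrable (fun x => (Vd (et n) (w x)).im) om := (iV n).im
      have h2 := integral_add_compl hE ii
      have e1 : ∫ x in Eᶜ, |(Vd (et n) (w x)).im| ∂om = σ * ∫ x in Eᶜ, (Vd (et n) (w x)).im ∂om := by
        rw [← integral_const_mul]
        apply setIntegral_congr_ae hE.compl
        filter_upwards [om_ac hs] with x hx hxE
        have h3 := hx hxE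
        rw [Vd_im]
        have h4 : 0 ≤ σ * ((w x).im / ‖1 + (et n : ℂ) * w x‖ ^ 2) := by
          rw [← mul_div_assoc]; positivity
        rw [← abs_of_nonneg h4, abs_mul σ, hσ, one_mul]
      have h5 : |∫ x in E, (Vd (et n) (w x)).im ∂om| ≤ ∫ x in E, |(w x).im| ∂om := by
        apply (abs_integral_le_integral_abs).trans
        apply integral_mono_ae ii.integrableOn.abs hi.abs
        filter_upwards [ae_restrict_of_ae hr] with x hx
        exact Vd_im_le _ (et_pos n) _ hx
      have h6 : |∫ x, (Vd (et n) (w x)).im ∂om| ≤ Real.pi * (1 + ∫ x, f x) := by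
        rw [h1]
        apply (Complex.abs_im_le_norm _).trans
        rw [norm_mul, Complex.norm_of_nonneg hpi.le]
        gcongr
        apply (Vd_norm_le _ (et_pos n) _ (W_re_ge f hf hf0 _ (by simp))).trans
        have := W_norm' f hf hf0 Complex.I 1 one_pos (by simp)
        rwa [div_one] at this
      rw [e1]
      apply (le_abs_self _).trans
      rw [abs_mul, hσ, one_mul]
      have h7 : ∫ x in Eᶜ, (Vd (et n) (w x)).im ∂om = ∫ x, (Vd (et n) (w x)).im ∂om - ∫ x in E, (Vd (et n) (w x)).im ∂om := by linarith
      rw [h7]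
      exact (abs_sub _ _).trans (add_le_add h6 h5)
    · exact Eventually.of_forall fun x => (Complex.continuous_im.tendsto _).comp (Vd_tendsto (w x))
  have hall : Integrable (fun x => (w x).im) om := by
    rw [← integrableOn_univ, ← union_compl_self E]
    exact hi.union key.1
  refine ⟨hall, ?_⟩
  rw [← integral_add_compl hE hall.abs]
  linarith [key.2]

theorem G2 (f : ℝ → ℝ) (hf : Integrable f) (hf0 : ∀ x, 0 ≤ f x) (w : ℝ → ℂ)
  (hw : ∀ᵐ x : ℝ, Tendsto (fun n => Wf f (x + et n * Complex.I)) atTop (nhds (w x))) (hfw : ∀ᵐ x : ℝ, (w x).re = 1 + f x) (hi : Integrable (fun x => (w x).im) om) :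
    Integrable (fun x => (1 + f x) * Real.log (1 + f x)) om ∧
    ∫ x, (1 + f x) * Real.log (1 + f x) ∂om ≤
      Real.pi * ((1 + ∫ x, f x) * (Real.log (2 * (1 + ∫ x, f x)) + Real.pi)) + Real.pi * ∫ x, |(w x).im| ∂om := by
  have hpi := Real.pi_pos
  set M := ∫ x, f x
  have hM : 0 ≤ M := integral_nonneg hf0
  have hr := om_ac (w_re1 f hf hf0 w hw)
  have hm := w_meas f hf hf0 w hw
  have mV : ∀ n, AEMeasurable (fun x => Vd (et n) (w x)) om := fun n => (Vd_meas _).comp_aemeasurable hm.aemeasurable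
  have et1 : ∀ n, et n ≤ 1 := et_le
  have lb : ∀ n (u : ℂ), 1 ≤ u.re → ‖Complex.log (2 * Vd (et n) u)‖ ≤ Real.log (2 * (et n)⁻¹) + Real.pi := by
    intro n u hu
    have h1 := Vd_norm_ge _ (et_pos n) (et1 n) u hu
    refine (norm_log_le _ h1).trans ?_
    gcongr
    rw [norm_mul]; simp only [Complex.norm_ofNat]
    have := Vd_norm_le' _ (et_pos n) u hu
    gcongr
  have slit : ∀ n (u : ℂ), 1 ≤ u.re → 2 * Vd (et n) u ∈ Complex.slitPlane := by
    intro n u hu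
    left
    have := Vd_re_pos _ (et_pos n) u hu
    simpa using this
  have key : Integrable (fun x => (w x).re * Real.log ‖2 * w x‖) om ∧
      ∫ x, |(w x).re * Real.log ‖2 * w x‖| ∂om ≤ Real.pi * ((1 + M) * (Real.log (2 * (1 + M)) + Real.pi)) + Real.pi * ∫ x, |(w x).im| ∂om := by
    have ib : ∀ n, Integrable (fun x => (Vd (et n) (w x)).re * Real.log ‖2 * Vd (et n) (w x)‖) om := by
      intro n
      refine Integrable.of_bound ?_ ((et n)⁻¹ * (Real.log (2 * (et n)⁻¹) + Real.pi)) ?_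
      · apply AEMeasurable.aestronglyMeasurable
        have := mV n
        fun_prop
      · filter_upwards [hr] with x hx
        rw [norm_mul]
        have h1 := Vd_norm_le' _ (et_pos n) _ hx
        have h2 := (Complex.abs_re_le_norm _).trans (lb n _ hx)
        rw [Complex.log_re] at h2
        have := et_pos n
        apply mul_le_mul ((Complex.abs_re_le_norm _).trans h1) h2 (abs_nonneg _) (by positivity)
    apply fatou_L1 om (fun n x => (Vd (et n) (w x)).re * Real.log ‖2 * Vd (et n) (w x)‖) _ _ ib
    · intro n
      have hbd : ∀ u : ℂ, 1 ≤ u.re → ‖Vd (et n) u * Complex.log (2 * Vd (et n) u)‖ ≤ (et n)⁻¹ * (Real.log (2 * (et n)⁻¹) + Real.pi) := by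
        intro u hu
        rw [norm_mul]
        have := et_pos n
        exact mul_le_mul (Vd_norm_le' _ (et_pos n) _ hu) (lb n u hu) (norm_nonneg _) (by positivity)
      have hv := mv0 (fun z => Vd (et n) (Wf f z) * Complex.log (2 * Vd (et n) (Wf f z))) ((et n)⁻¹ * (Real.log (2 * (et n)⁻¹) + Real.pi))
        (fun z hz => (VW_diff f hf hf0 w hw _ (et_pos n) z hz).mul
          (((VW_diff f hf hf0 w hw _ (et_pos n) z hz).const_mul 2).clog (slit n _ (W_re_ge f hf hf0 z hz))))
        (fun z hz => hbd _ (W_re_ge f hf hf0 z hz))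
        (fun x => Vd (et n) (w x) * Complex.log (2 * Vd (et n) (w x)))
        (by
          filter_upwards [hw, w_re1 f hf hf0 w hw] with x hx hx1
          have h1 := (Vd_contAt _ (et_pos n) _ hx1).tendsto.comp hx
          exact h1.mul ((h1.const_mul 2).clog (slit n _ hx1)))
      have iH : Integrable (fun x => Vd (et n) (w x) * Complex.log (2 * Vd (et n) (w x))) om := by
        refine Integrable.of_bound ?_ _ (by filter_upwards [hr] with x hx using hbd _ hx)
        apply AEMeasurable.aestronglyMeasurable
        have := mV n
        fun_prop
      have h1 := Complex.reCLM.integral_comp_comm iH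
      simp only [Complex.reCLM_apply] at h1
      rw [hv] at h1
      have iHr : Integrable (fun x => (Vd (et n) (w x) * Complex.log (2 * Vd (et n) (w x))).re) om := iH.re
      have h2 : ∫ x, |(Vd (et n) (w x)).re * Real.log ‖2 * Vd (et n) (w x)‖| ∂om ≤
          ∫ x, ((Vd (et n) (w x) * Complex.log (2 * Vd (et n) (w x))).re + Real.pi * |(w x).im|) ∂om := by
        apply integral_mono_ae (ib n).abs (iHr.add (hi.abs.const_mul _))
        filter_upwards [hr] with x hx
        have a1 := Vd_norm_ge _ (et_pos n) (et1 n) _ hx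
        have a2 := Vd_re_pos _ (et_pos n) _ hx
        have a3 := Vd_im_le _ (et_pos n) _ hx
        simp only [Pi.add_apply]
        rw [abs_of_nonneg (mul_nonneg a2.le (Real.log_nonneg a1)), Complex.mul_re, Complex.log_re, Complex.log_im]
        have a4 : (Vd (et n) (w x)).im * Complex.arg (2 * Vd (et n) (w x)) ≤ Real.pi * |(w x).im| := by
          apply (le_abs_self _).trans
          rw [abs_mul, mul_comm]
          exact mul_le_mul (Complex.abs_arg_le_pi _) a3 (abs_nonneg _) hpi.le
        linarith
      rw [integral_add iHr (hi.abs.const_mul _), integral_const_mul, h1] at h2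
      refine h2.trans ?_
      gcongr
      apply (Complex.re_le_norm _).trans
      rw [norm_mul, Complex.norm_of_nonneg hpi.le]
      gcongr
      have hI := W_re_ge f hf hf0 Complex.I (by simp)
      have hW := W_norm' f hf hf0 Complex.I 1 one_pos (by simp)
      rw [div_one] at hW
      have hV := (Vd_norm_le _ (et_pos n) _ hI).trans hW
      have hG := Vd_norm_ge _ (et_pos n) (et1 n) _ hI
      rw [norm_mul]
      refine mul_le_mul hV ((norm_log_le _ hG).trans ?_) (norm_nonneg _) (by positivity)
      gcongr
      rw [norm_mul]; simp only [Complex.norm_ofNat]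
      gcongr
    · filter_upwards [hr] with x hx
      have h1 := Vd_tendsto (w x)
      have hne : ‖2 * w x‖ ≠ 0 := by
        have := re1_norm _ hx
        rw [norm_mul]; simp only [Complex.norm_ofNat]; positivity
      exact ((Complex.continuous_re.tendsto _).comp h1).mul (((h1.const_mul 2).norm).log hne)
  have hpt : ∀ᵐ x ∂om, 0 ≤ (1 + f x) * Real.log (1 + f x) ∧ (1 + f x) * Real.log (1 + f x) ≤ |(w x).re * Real.log ‖2 * w x‖| := by
    filter_upwards [hr, om_ac hfw] with x hx hx2
    have h0 := hf0 x
    refine ⟨mul_nonneg (by linarith) (Real.log_nonneg (by linarith)), ?_⟩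
    apply le_trans _ (le_abs_self _)
    rw [hx2]
    gcongr
    have := Complex.re_le_norm (w x)
    rw [norm_mul]; simp only [Complex.norm_ofNat]
    linarith
  have hint : Integrable (fun x => (1 + f x) * Real.log (1 + f x)) om := by
    apply key.1.abs.mono'
    · have : AEMeasurable f om := hf.aestronglyMeasurable.aemeasurable.mono_ac om_ac
      apply AEMeasurable.aestronglyMeasurable
      fun_prop
    · filter_upwards [hpt] with x hx
      rw [Real.norm_of_nonneg hx.1]; exact hx.2
  refine ⟨hint, ?_⟩
  refine le_trans ?_ key.2
  apply integral_mono_ae hint key.1.abs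
  filter_upwards [hpt] with x hx using hx.2

theorem om_half : volume.restrict (Ioo (-1 : ℝ) 1) ≤ (2 : ENNReal) • om := by
  have : volume.restrict (Ioo (-1 : ℝ) 1) = (volume.restrict (Ioo (-1 : ℝ) 1)).withDensity 1 := withDensity_one.symm
  unfold om
  rw [this, ← withDensity_indicator measurableSet_Ioo, ← withDensity_smul _ (by fun_prop)]
  apply withDensity_mono
  refine Eventually.of_forall fun x => ?_
  by_cases hx : x ∈ Ioo (-1 : ℝ) 1
  · rw [indicator_of_mem hx]
    simp only [Pi.one_apply, Pi.smul_apply, smul_eq_mul]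
    rw [← ENNReal.ofReal_one, show (2 : ENNReal) = ENNReal.ofReal 2 by simp, ← ENNReal.ofReal_mul (by norm_num)]
    apply ENNReal.ofReal_le_ofReal
    rw [← div_eq_mul_inv, le_div_iff₀ (by positivity)]
    nlinarith [hx.1, hx.2]
  · rw [indicator_of_notMem hx]; simp

theorem om_to_Ioo (F : ℝ → ℝ) (h0 : ∀ x, 0 ≤ F x) (hF : Integrable F om) :
    IntegrableOn F (Ioo (-1) 1) ∧ ∫ x in Ioo (-1 : ℝ) 1, F x ≤ 2 * ∫ x, F x ∂om := by
  have h1 : Integrable F ((2 : ENNReal) • om) := hF.smul_measure (by simp)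
  refine ⟨h1.mono_measure om_half, ?_⟩
  have := integral_mono_measure om_half (Eventually.of_forall h0) h1
  rw [integral_smul_measure] at this
  simpa using this

def PVr (f : ℝ → ℝ) (x ε : ℝ) : ℝ := Real.pi⁻¹ * ∫ y in {y : ℝ | ε ≤ |y - x|}, f y / (y - x)

theorem bdry_w (f : ℝ → ℝ) (hf : Integrable f) (hf0 : ∀ x, 0 ≤ f x) :
    ∃ w : ℝ → ℂ, (∀ᵐ x : ℝ, Tendsto (fun n => Wf f (x + et n * Complex.I)) atTop (nhds (w x))) ∧
      (∀ᵐ x, (w x).re = 1 + f x) ∧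
      (∀ᵐ x, Tendsto (PVr f x) (nhdsWithin 0 (Ioi 0)) (nhds (-(w x).im))) := by
  have h := bdry f hf hf0
  have h2 : ∀ x : ℝ, ∃ w : ℂ, (∃ w : ℂ, Tendsto (fun y : ℝ => Wf f (x + y * Complex.I)) (nhdsWithin 0 (Ioi 0)) (nhds w) ∧
      w.re = 1 + f x ∧
      Tendsto (fun ε : ℝ => Real.pi⁻¹ * ∫ y in {y : ℝ | ε ≤ |y - x|}, f y / (y - x))
        (nhdsWithin 0 (Ioi 0)) (nhds (-w.im))) → (Tendsto (fun y : ℝ => Wf f (x + y * Complex.I)) (nhdsWithin 0 (Ioi 0)) (nhds w) ∧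
      w.re = 1 + f x ∧
      Tendsto (fun ε : ℝ => Real.pi⁻¹ * ∫ y in {y : ℝ | ε ≤ |y - x|}, f y / (y - x))
        (nhdsWithin 0 (Ioi 0)) (nhds (-w.im))) := by
    intro x
    by_cases hx : ∃ w : ℂ, Tendsto (fun y : ℝ => Wf f (x + y * Complex.I)) (nhdsWithin 0 (Ioi 0)) (nhds w) ∧
      w.re = 1 + f x ∧
      Tendsto (fun ε : ℝ => Real.pi⁻¹ * ∫ y in {y : ℝ | ε ≤ |y - x|}, f y / (y - x))
        (nhdsWithin 0 (Ioi 0)) (nhds (-w.im))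
    · obtain ⟨w, hw⟩ := hx
      exact ⟨w, fun _ => hw⟩
    · exact ⟨0, fun h => absurd h hx⟩
  choose w hw using h2
  refine ⟨w, ?_, ?_, ?_⟩
  · filter_upwards [h] with x hx
    exact (hw x hx).1.comp et_lim'
  · filter_upwards [h] with x hx using (hw x hx).2.1
  · filter_upwards [h] with x hx using (hw x hx).2.2

theorem Freal (f : ℝ → ℝ) (hf : Integrable f) (hf0 : ∀ x, 0 ≤ f x)
    (hF : Integrable fun x => (1 + f x) * Real.log (1 + f x)) (T : ℝ → ℝ)
    (hT : ∀ᵐ x, Tendsto (PVr f x) (nhdsWithin 0 (Ioi 0)) (nhds (T x))) :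
    IntegrableOn T (Ioo (-1) 1) := by
  obtain ⟨w, h1, -, h3⟩ := bdry_w f hf hf0
  have hi : Integrable T om := by
    have := (stepF f hf hf0 hF (fun x => (w x).im) (by
      filter_upwards [h1] with x hx
      exact (Complex.continuous_im.tendsto _).comp hx)).neg
    apply this.congr
    apply om_ac.ae_eq
    filter_upwards [h3, hT] with x a b
    exact tendsto_nhds_unique a b
  have h1 : Integrable T ((2 : ENNReal) • om) := hi.smul_measure (by simp)
  exact h1.mono_measure om_half

def Psi (M K : ℝ) : ℝ := 2 * (Real.pi * ((1 + M) * (Real.log (2 * (1 + M)) + Real.pi)) +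
  Real.pi * (Real.pi * (1 + M) + 2 * (K + Real.pi * (1 + M))))

theorem Psi_mono (M M' K : ℝ) (hM : 0 ≤ M) (h : M ≤ M') : Psi M K ≤ Psi M' K := by
  unfold Psi
  have := Real.pi_pos
  have : 0 ≤ Real.log (2 * (1 + M)) := Real.log_nonneg (by linarith)
  have : Real.log (2 * (1 + M)) ≤ Real.log (2 * (1 + M')) := Real.log_le_log (by linarith) (by linarith)
  have : 0 ≤ 1 + M' := by linarith
  gcongr

theorem Gright (f : ℝ → ℝ) (hf : Integrable f) (hf0 : ∀ x, 0 ≤ f x)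
    (hs : ∀ x, x ∉ Ioo (0:ℝ) 1 → f x = 0) (T : ℝ → ℝ)
    (hT : ∀ᵐ x, Tendsto (PVr f x) (nhdsWithin 0 (Ioi 0)) (nhds (T x)))
    (hTi : IntegrableOn T (Ioo (-1) 1)) (K : ℝ) (hK : ∫ x in Ioo (-1 : ℝ) 1, |T x| ≤ K) :
    IntegrableOn (fun x => (1 + f x) * Real.log (1 + f x)) (Ioo (-1) 1) ∧
    ∫ x in Ioo (-1 : ℝ) 1, (1 + f x) * Real.log (1 + f x) ≤ Psi (2 * Real.pi * K) K := by
  obtain ⟨w, h1, h2, h3⟩ := bdry_w f hf hf0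
  have hpi := Real.pi_pos
  set M := ∫ x, f x with hMd
  have hM : 0 ≤ M := integral_nonneg hf0
  have hTw : ∀ᵐ x, T x = -(w x).im := by
    filter_upwards [h3, hT] with x a b
    exact tendsto_nhds_unique b a
  have hMK : M ≤ 2 * Real.pi * K := by
    have a1 : ∀ᵐ x, x ∈ Ioo (-1 : ℝ) 0 → M / (2 * Real.pi) ≤ |T x| := by
      filter_upwards [hT] with t ht htm
      have a2 : ∀ᶠ ε in nhdsWithin (0:ℝ) (Ioi 0), M / (2 * Real.pi) ≤ PVr f t ε := by
        have : Ioo (0:ℝ) (-t) ∈ nhdsWithin (0:ℝ) (Ioi 0) := Ioo_mem_nhdsGT (by linarith [htm.2])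
        filter_upwards [this] with ε hε
        unfold PVr
        have a3 : M / 2 ≤ ∫ y in {y : ℝ | ε ≤ |y - t|}, f y / (y - t) := by
          have hS : MeasurableSet {y : ℝ | ε ≤ |y - t|} := measurableSet_le measurable_const (by fun_prop)
          rw [← integral_indicator hS, hMd, ← integral_div]
          apply integral_mono (hf.div_const 2)
          · apply (hf.mul_const ε⁻¹).mono'
            · apply AEStronglyMeasurable.indicator _ hS
              apply AEStronglyMeasurable.div₀ hf.aestronglyMeasurable
              fun_prop
            · refine Eventually.of_forall fun y => ?_
              by_cases hy : ε ≤ |y - t|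
              · rw [indicator_of_mem (by simpa using hy), norm_div, Real.norm_of_nonneg (hf0 y), Real.norm_eq_abs, div_eq_mul_inv]
                have := hf0 y
                have := hε.1
                gcongr
              · rw [indicator_of_notMem (by simpa using hy), norm_zero]
                exact mul_nonneg (hf0 y) (inv_nonneg.mpr hε.1.le)
          · intro y
            by_cases hy : y ∈ Ioo (0:ℝ) 1
            · have h5 : 0 < y - t := by linarith [hy.1, htm.2]
              have : ε ≤ |y - t| := by rw [abs_of_pos h5]; linarith [hy.1, hε.2]
              simp only []
              rw [indicator_of_mem (by simpa using this)]
              exact div_le_div_of_nonneg_left (hf0 y) h5 (by linarith [hy.2, htm.1])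
            · simp only [indicator]
              rw [hs y hy]; simp
        rw [inv_mul_eq_div, le_div_iff₀ hpi]
        refine le_trans (le_of_eq ?_) a3
        field_simp
      exact (ge_of_tendsto ht a2).trans (le_abs_self _)
    have hTi0 : IntegrableOn T (Ioo (-1) 0) := hTi.mono_set (Ioo_subset_Ioo_right (by norm_num))
    have a4 : M / (2 * Real.pi) ≤ ∫ x in Ioo (-1 : ℝ) 0, |T x| := by
      have : ∫ x in Ioo (-1 : ℝ) 0, M / (2 * Real.pi) ≤ ∫ x in Ioo (-1 : ℝ) 0, |T x| := by
        apply setIntegral_mono_on_ae (integrableOn_const (by simp)) hTi0.abs measurableSet_Ioo a1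
      simpa using this
    have a5 : ∫ x in Ioo (-1 : ℝ) 0, |T x| ≤ ∫ x in Ioo (-1 : ℝ) 1, |T x| :=
      setIntegral_mono_set hTi.abs (Eventually.of_forall fun x => abs_nonneg _)
        (Ioo_subset_Ioo_right (by norm_num)).eventuallyLE
    have a6 := a4.trans (a5.trans hK)
    rw [div_le_iff₀ (by positivity)] at a6
    linarith
  -- integrability on `E`
  have eE : Iio (1:ℝ) = Iic (-1) ∪ Ioo (-1) 1 := by
    ext x; simp only [mem_Iio, mem_union, mem_Iic, mem_Ioo]; constructor
    · intro h; rcases le_or_gt x (-1) with h' | h'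
      · exact Or.inl h'
      · exact Or.inr ⟨h', h⟩
    · rintro (h | h); linarith; exact h.2
  have dE : Disjoint (Iic (-1:ℝ)) (Ioo (-1) 1) := by
    rw [Set.disjoint_left]; intro x hx hx2; exact absurd hx (not_le.mpr hx2.1)
  have hwm := w_meas f hf hf0 w h1
  have hb : ∀ᵐ x : ℝ, x ∈ Iic (-1:ℝ) → |(w x).im| ≤ 1 + M := by
    filter_upwards [h1] with x hx hx1
    apply (Complex.abs_im_le_norm _).trans
    apply le_of_tendsto' hx.norm
    intro n
    have := W_norm f hf hf0 (x + et n * Complex.I) 1 one_pos (by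
      intro y hy
      have hy' : y ∈ Ioo (0:ℝ) 1 := by by_contra h; exact hy (hs y h)
      refine le_trans ?_ (Complex.re_le_norm _)
      simp
      linarith [hy'.1, mem_Iic.mp hx1])
    rwa [div_one] at this
  have i1 : IntegrableOn (fun x => (w x).im) (Iic (-1)) om := by
    apply Integrable.of_bound _ (1 + M)
    · rw [ae_restrict_iff' measurableSet_Iic]
      exact om_ac hb
    · exact (Complex.measurable_im.comp_aemeasurable hwm.aemeasurable).aestronglyMeasurable.restrict
  have hTw' : ∀ᵐ x ∂(volume.restrict (Ioo (-1:ℝ) 1)), T x = -(w x).im := ae_restrict_of_ae hTw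
  have i2v : IntegrableOn (fun x => (w x).im) (Ioo (-1) 1) := by
    apply hTi.neg.congr
    filter_upwards [hTw'] with x hx
    simp [hx]
  have i2 : IntegrableOn (fun x => (w x).im) (Ioo (-1) 1) om := i2v.mono_measure om_le
  have iE : IntegrableOn (fun x => (w x).im) (Iio 1) om := by rw [eE]; exact i1.union i2
  have bE : ∫ x in Iio 1, |(w x).im| ∂om ≤ K + Real.pi * (1 + M) := by
    rw [eE, setIntegral_union dE measurableSet_Ioo i1.abs i2.abs, add_comm]
    apply add_le_add
    · refine le_trans ?_ hK
      refine (integral_mono_measure (Measure.restrict_mono le_rfl om_le) (Eventually.of_forall fun x => abs_nonneg _) i2v.abs).trans (le_of_eq ?_)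
      apply integral_congr_ae
      filter_upwards [hTw'] with x hx
      simp [hx]
    · calc ∫ x in Iic (-1), |(w x).im| ∂om ≤ ∫ x in Iic (-1:ℝ), (1 + M) ∂om := by
            apply setIntegral_mono_on_ae i1.abs (integrableOn_const (by simp)) measurableSet_Iic (om_ac hb)
        _ = om.real (Iic (-1)) * (1 + M) := by simp
        _ ≤ om.real univ * (1 + M) := by
            gcongr
            · simp
            · exact subset_univ _
        _ = Real.pi * (1 + M) := by rw [om_real_univ]
  obtain ⟨iim, bim⟩ := G1 f hf hf0 w h1 (Iio 1) measurableSet_Iio 1 (by simp) (by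
    filter_upwards [h1] with x hx hxE
    rw [one_mul]
    apply ge_of_tendsto' ((Complex.continuous_im.tendsto _).comp hx)
    intro n
    simp only [Function.comp]
    rw [W_im f hf _ (by simpa using et_pos n)]
    rw [neg_nonneg]
    apply mul_nonpos_of_nonneg_of_nonpos (by positivity)
    apply integral_nonpos
    intro y
    simp only [Pi.zero_apply]
    by_cases hy : y ∈ Ioo (0:ℝ) 1
    · apply mul_nonpos_of_nonneg_of_nonpos (hf0 y)
      apply div_nonpos_of_nonpos_of_nonneg
      · have : 1 ≤ x := by simpa using hxE
        simp; linarith [hy.2]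
      · positivity
    · rw [hs y hy, zero_mul]) iE
  obtain ⟨iF, bF⟩ := G2 f hf hf0 w h1 h2 iim
  obtain ⟨r1, r2⟩ := om_to_Ioo (fun x => (1 + f x) * Real.log (1 + f x))
    (fun x => mul_nonneg (by linarith [hf0 x]) (Real.log_nonneg (by linarith [hf0 x]))) iF
  refine ⟨r1, r2.trans (le_trans ?_ (Psi_mono _ _ K hM hMK))⟩
  unfold Psi
  have := mul_le_mul_of_nonneg_left bE (by positivity : 0 ≤ Real.pi * 2)
  have := mul_le_mul_of_nonneg_left bim hpi.le
  change _ ≤ 2 * _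
  linarith

theorem PVr_neg (f : ℝ → ℝ) (x ε : ℝ) : PVr (fun y => f (-y)) x ε = -PVr f (-x) ε := by
  unfold PVr
  have hS : ∀ x, MeasurableSet {y : ℝ | ε ≤ |y - x|} := fun x => measurableSet_le measurable_const (by fun_prop)
  rw [← integral_indicator (hS _), ← integral_indicator (hS _), ← mul_neg, ← integral_neg,
    ← integral_neg_eq_self]
  congr 2
  ext y
  have e : (ε ≤ |-y - x|) ↔ ε ≤ |y - -x| := by rw [← abs_neg (-y - x)]; ring_nf
  by_cases h : ε ≤ |y - -x|
  · rw [indicator_of_mem (by simpa using e.mpr h), indicator_of_mem (by simpa using h), ← div_neg]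
    simp only [neg_neg]
    ring_nf
  · rw [indicator_of_notMem (show -y ∉ {y : ℝ | ε ≤ |y - x|} from fun h' => h (e.mp h')), indicator_of_notMem (by simpa using h), neg_zero]

theorem Greal (f : ℝ → ℝ) (hf : Integrable f) (hf0 : ∀ x, 0 ≤ f x)
    (hs : (∀ x, x ∉ Ioo (0:ℝ) 1 → f x = 0) ∨ (∀ x, x ∉ Ioo (-1:ℝ) 0 → f x = 0)) (T : ℝ → ℝ)
    (hT : ∀ᵐ x, Tendsto (PVr f x) (nhdsWithin 0 (Ioi 0)) (nhds (T x)))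
    (hTi : IntegrableOn T (Ioo (-1) 1)) (K : ℝ) (hK : ∫ x in Ioo (-1 : ℝ) 1, |T x| ≤ K) :
    IntegrableOn (fun x => (1 + f x) * Real.log (1 + f x)) (Ioo (-1) 1) ∧
    ∫ x in Ioo (-1 : ℝ) 1, (1 + f x) * Real.log (1 + f x) ≤ Psi (2 * Real.pi * K) K := by
  rcases hs with hs | hs
  · exact Gright f hf hf0 hs T hT hTi K hK
  · have mp : MeasurePreserving (fun x : ℝ => -x) volume volume := Measure.measurePreserving_neg volume
    have me : MeasurableEmbedding (fun x : ℝ => -x) := (MeasurableEquiv.neg ℝ).measurableEmbedding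
    have pre : (fun x : ℝ => -x) ⁻¹' (Ioo (-1) 1) = Ioo (-1) 1 := by
      ext x; simp only [mem_preimage, mem_Ioo]; constructor <;> rintro ⟨a, b⟩ <;> constructor <;> linarith
    have ii : ∀ g : ℝ → ℝ, IntegrableOn (fun x => g (-x)) (Ioo (-1) 1) ↔ IntegrableOn g (Ioo (-1) 1) := by
      intro g
      have := mp.integrableOn_comp_preimage me (f := g) (s := Ioo (-1) 1)
      rw [pre] at this; exact this
    have jj : ∀ g : ℝ → ℝ, ∫ x in Ioo (-1 : ℝ) 1, g (-x) = ∫ x in Ioo (-1 : ℝ) 1, g x := by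
      intro g
      have := mp.setIntegral_preimage_emb me g (Ioo (-1) 1)
      rw [pre] at this; exact this
    obtain ⟨r1, r2⟩ := Gright (fun x => f (-x)) hf.comp_neg (fun x => hf0 _)
      (fun x hx => hs _ (fun h => hx ⟨by linarith [h.2], by linarith [h.1]⟩)) (fun x => -T (-x))
      (by
        have := mp.quasiMeasurePreserving.ae hT
        filter_upwards [this] with x hx
        have e : PVr (fun y => f (-y)) x = fun ε => -PVr f (-x) ε := by ext ε; exact PVr_neg f x ε
        rw [e]
        exact hx.neg)
      (by exact ((ii T).mpr hTi).neg) K (by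
        simp only [abs_neg]
        rw [jj (fun x => |T x|)]; exact hK)
    refine ⟨(ii (fun x => (1 + f x) * Real.log (1 + f x))).mp r1, ?_⟩
    rw [← jj (fun x => (1 + f x) * Real.log (1 + f x))]; exact r2

def PVc (h : ℝ → ℂ) (t ε : ℝ) : ℂ := (Real.pi : ℂ)⁻¹ *
      ∫ x in {x : ℝ | x ∈ Set.Ioo (-1 : ℝ) 1 ∧ ε ≤ |x - t|}, h x / ((x : ℂ) - (t : ℂ))

theorem Q_meas (t ε : ℝ) : MeasurableSet {x : ℝ | x ∈ Set.Ioo (-1 : ℝ) 1 ∧ ε ≤ |x - t|} := by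
  have : MeasurableSet {x : ℝ | ε ≤ |x - t|} := measurableSet_le measurable_const (by fun_prop)
  exact measurableSet_Ioo.inter this

theorem PVr_eq (g : ℝ → ℝ) (hs : ∀ x, x ∉ Ioo (-1 : ℝ) 1 → g x = 0) (t ε : ℝ) :
    PVr g t ε = Real.pi⁻¹ * ∫ x in {x : ℝ | x ∈ Set.Ioo (-1 : ℝ) 1 ∧ ε ≤ |x - t|}, g x / (x - t) := by
  unfold PVr
  congr 1
  have hm : MeasurableSet {x : ℝ | ε ≤ |x - t|} := measurableSet_le measurable_const (by fun_prop)
  apply setIntegral_eq_of_subset_of_forall_sdiff_eq_zero hm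
  · intro x hx; exact hx.2
  · intro x hx
    have : x ∉ Ioo (-1 : ℝ) 1 := fun h => hx.2 ⟨h, hx.1⟩
    rw [hs x this, zero_div]

theorem h_int (h : ℝ → ℂ) (hh : IntegrableOn h (Ioo (-1) 1)) (t ε : ℝ) (hε : 0 < ε) :
    IntegrableOn (fun x : ℝ => h x / ((x : ℂ) - (t : ℂ))) {x : ℝ | x ∈ Set.Ioo (-1 : ℝ) 1 ∧ ε ≤ |x - t|} := by
  have h1 : IntegrableOn h {x : ℝ | x ∈ Set.Ioo (-1 : ℝ) 1 ∧ ε ≤ |x - t|} := hh.mono_set fun x hx => hx.1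
  refine Integrable.mono' (h1.norm.mul_const ε⁻¹) ?_ ?_
  · apply AEMeasurable.aestronglyMeasurable
    have := h1.aestronglyMeasurable.aemeasurable
    fun_prop
  · apply ae_restrict_of_forall_mem (Q_meas t ε)
    intro x hx
    rw [norm_div, div_eq_mul_inv]
    have : ‖(x : ℂ) - (t : ℂ)‖ = |x - t| := by rw [← Complex.ofReal_sub, Complex.norm_real, Real.norm_eq_abs]
    rw [this]
    gcongr
    exact hx.2

theorem re_PV (g : ℝ → ℝ) (hs : ∀ x, x ∉ Ioo (-1 : ℝ) 1 → g x = 0) (h : ℝ → ℂ) (hh : IntegrableOn h (Ioo (-1) 1)) (c : ℂ)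
    (hg : ∀ᵐ x ∂(volume.restrict (Ioo (-1 : ℝ) 1)), g x = (c * h x).re) (t ε : ℝ) (hε : 0 < ε) :
    PVr g t ε = (c * PVc h t ε).re := by
  rw [PVr_eq g hs]
  unfold PVc
  have e1 : c * ((Real.pi : ℂ)⁻¹ * ∫ x in {x : ℝ | x ∈ Set.Ioo (-1 : ℝ) 1 ∧ ε ≤ |x - t|}, h x / ((x : ℂ) - (t : ℂ))) =
      ((Real.pi⁻¹ : ℝ) : ℂ) * ∫ x in {x : ℝ | x ∈ Set.Ioo (-1 : ℝ) 1 ∧ ε ≤ |x - t|}, c * (h x / ((x : ℂ) - (t : ℂ))) := by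
    rw [integral_const_mul]; push_cast; ring
  rw [e1, Complex.re_ofReal_mul]
  congr 1
  have h1 := Complex.reCLM.integral_comp_comm ((h_int h hh t ε hε).const_mul c)
  simp only [Complex.reCLM_apply] at h1
  rw [← h1]
  apply integral_congr_ae
  have h2 : ∀ᵐ x ∂(volume.restrict {x : ℝ | x ∈ Set.Ioo (-1 : ℝ) 1 ∧ ε ≤ |x - t|}), g x = (c * h x).re :=
    ae_restrict_of_ae_restrict_of_subset (fun x hx => hx.1) hg
  filter_upwards [h2] with x hx
  rw [hx, ← mul_div_assoc, ← Complex.ofReal_sub, Complex.div_ofReal_re]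

def kp (s : Set ℝ) (c : ℂ) (h : ℝ → ℂ) : ℝ → ℝ := s.indicator fun x => max ((c * h x).re) 0

theorem kp_nonneg (s : Set ℝ) (c : ℂ) (h : ℝ → ℂ) (x : ℝ) : 0 ≤ kp s c h x :=
  indicator_nonneg (fun _ _ => le_max_right _ _) x

theorem kp_le (s : Set ℝ) (c : ℂ) (hc : ‖c‖ ≤ 1) (h : ℝ → ℂ) (x : ℝ) : kp s c h x ≤ ‖h x‖ := by
  unfold kp
  by_cases hx : x ∈ s
  · rw [indicator_of_mem hx]
    apply max_le _ (norm_nonneg _)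
    apply (Complex.re_le_norm _).trans
    rw [norm_mul]
    exact mul_le_of_le_one_left (norm_nonneg _) hc
  · rw [indicator_of_notMem hx]; exact norm_nonneg _

theorem kp_meas (s : Set ℝ) (hs : MeasurableSet s) (hsI : s ⊆ Ioo (-1) 1) (c : ℂ) (h : ℝ → ℂ)
    (hh : AEStronglyMeasurable h (volume.restrict (Ioo (-1 : ℝ) 1))) : AEStronglyMeasurable (kp s c h) volume := by
  unfold kp
  rw [aestronglyMeasurable_indicator_iff hs]
  have := (hh.mono_measure (Measure.restrict_mono hsI le_rfl)).aemeasurable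
  apply AEMeasurable.aestronglyMeasurable
  fun_prop

theorem kp_zero (s : Set ℝ) (hsI : s ⊆ Ioo (-1) 1) (c : ℂ) (h : ℝ → ℂ) (x : ℝ) (hx : x ∉ Ioo (-1 : ℝ) 1) : kp s c h x = 0 :=
  indicator_of_notMem (fun h => hx (hsI h)) _

theorem kp_int (s : Set ℝ) (hs : MeasurableSet s) (hsI : s ⊆ Ioo (-1) 1) (c : ℂ) (hc : ‖c‖ ≤ 1) (h : ℝ → ℂ)
    (hh : IntegrableOn h (Ioo (-1) 1)) : Integrable (kp s c h) := by
  rw [← integrableOn_iff_integrable_of_support_subset (s := Ioo (-1) 1)]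
  · apply hh.norm.mono' (kp_meas s hs hsI c h hh.1).restrict
    refine Eventually.of_forall fun x => ?_
    rw [Real.norm_of_nonneg (kp_nonneg _ _ _ _)]
    exact kp_le s c hc h x
  · intro x hx
    by_contra h'
    exact hx (kp_zero s hsI c h x h')

theorem PVr_split (c : ℂ) (hc : ‖c‖ ≤ 1) (h : ℝ → ℂ) (hh : IntegrableOn h (Ioo (-1) 1)) (t ε : ℝ) (hε : 0 < ε) :
    (c * PVc h t ε).re = PVr (kp (Ioo (-1) 1) c h) t ε - PVr (kp (Ioo (-1) 1) (-c) h) t ε := by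
  have z1 := kp_zero (Ioo (-1) 1) Subset.rfl c h
  have z2 := kp_zero (Ioo (-1) 1) Subset.rfl (-c) h
  have hi : ∀ c : ℂ, ‖c‖ ≤ 1 → IntegrableOn (fun x => kp (Ioo (-1) 1) c h x / (x - t)) {x : ℝ | x ∈ Set.Ioo (-1 : ℝ) 1 ∧ ε ≤ |x - t|} := by
    intro c hc
    have := (h_int (fun x => (kp (Ioo (-1) 1) c h x : ℂ)) (kp_int _ measurableSet_Ioo Subset.rfl c hc h hh).ofReal.integrableOn t ε hε).re
    refine this.congr (Eventually.of_forall fun x => ?_)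
    simp only [RCLike.re_eq_complex_re]
    rw [← Complex.ofReal_sub, Complex.div_ofReal_re, Complex.ofReal_re]
  rw [← re_PV (fun x => kp (Ioo (-1) 1) c h x - kp (Ioo (-1) 1) (-c) h x) (fun x hx => by rw [z1 x hx, z2 x hx, sub_zero]) h hh c _ t ε hε,
    PVr_eq _ z1, PVr_eq _ z2, PVr_eq, ← mul_sub, ← integral_sub (hi c hc) (hi (-c) (by simpa using hc))]
  · simp_rw [sub_div]
  · intro x hx; rw [z1 x hx, z2 x hx, sub_zero]
  · apply ae_restrict_of_forall_mem measurableSet_Ioo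
    intro x hx
    unfold kp
    rw [indicator_of_mem hx, indicator_of_mem hx, neg_mul, Complex.neg_re]
    rcases le_total 0 ((c * h x).re) with h | h
    · rw [max_eq_left h, max_eq_right (by linarith)]; ring
    · rw [max_eq_right h, max_eq_left (by linarith)]; ring

theorem exT (g : ℝ → ℝ) (hg : Integrable g) (h0 : ∀ x, 0 ≤ g x) :
    ∃ T : ℝ → ℝ, ∀ᵐ x, Tendsto (PVr g x) (nhdsWithin 0 (Ioi 0)) (nhds (T x)) := by
  obtain ⟨w, -, -, h⟩ := bdry_w g hg h0
  exact ⟨_, h⟩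

theorem FHT_split (h : ℝ → ℂ) (hh : IntegrableOn h (Ioo (-1) 1)) :
    ∃ T : ℂ → ℝ → ℝ, (∀ c : ℂ, ‖c‖ ≤ 1 → ∀ᵐ x, Tendsto (PVr (kp (Ioo (-1) 1) c h) x) (nhdsWithin 0 (Ioi 0)) (nhds (T c x))) ∧
      ∀ᵐ x, Tendsto (PVc h x) (nhdsWithin 0 (Ioi 0)) (nhds ((T 1 x - T (-1) x : ℝ) + ((T (-Complex.I) x - T (Complex.I) x : ℝ) : ℂ) * Complex.I)) := by
  have : ∀ c : ℂ, ∃ T : ℝ → ℝ, ‖c‖ ≤ 1 → ∀ᵐ x, Tendsto (PVr (kp (Ioo (-1) 1) c h) x) (nhdsWithin 0 (Ioi 0)) (nhds (T x)) := by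
    intro c
    by_cases hc : ‖c‖ ≤ 1
    · obtain ⟨T, hT⟩ := exT _ (kp_int _ measurableSet_Ioo Subset.rfl c hc h hh) (kp_nonneg _ c h)
      exact ⟨T, fun _ => hT⟩
    · exact ⟨0, fun h => absurd h hc⟩
  choose T hT using this
  refine ⟨T, hT, ?_⟩
  filter_upwards [hT 1 (by simp), hT (-1) (by simp), hT Complex.I (by simp), hT (-Complex.I) (by simp)] with x a b c d
  have q1 := (Complex.continuous_ofReal.tendsto _).comp (a.sub b)
  have q2 := (Complex.continuous_ofReal.tendsto _).comp (d.sub c)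
  refine (q1.add (q2.mul_const Complex.I)).congr' ?_
  filter_upwards [self_mem_nhdsWithin] with ε hε
  have s1 := PVr_split 1 (by simp) h hh x ε hε
  have s2 := PVr_split (-Complex.I) (by simp) h hh x ε hε
  rw [neg_neg] at s2
  simp only [Function.comp]
  rw [← s1, ← s2]
  apply Complex.ext <;> simp

theorem FHT_lim (h : ℝ → ℂ) (hh : IntegrableOn h (Ioo (-1) 1)) :
    ∀ᵐ x, Tendsto (PVc h x) (nhdsWithin 0 (Ioi 0)) (nhds (FHT h x)) := by
  obtain ⟨T, -, hT⟩ := FHT_split h hh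
  filter_upwards [hT] with x hx
  exact tendsto_nhds_limUnder ⟨_, hx⟩

theorem coreD (g : ℝ → ℝ) (hg : Integrable g) (hg0 : ∀ x, 0 ≤ g x)
    (hs : (∀ x, x ∉ Ioo (0:ℝ) 1 → g x = 0) ∨ (∀ x, x ∉ Ioo (-1:ℝ) 0 → g x = 0))
    (h : ℝ → ℂ) (hh : IntegrableOn h (Ioo (-1) 1)) (c : ℂ) (hc : ‖c‖ ≤ 1)
    (hgh : ∀ᵐ x ∂(volume.restrict (Ioo (-1 : ℝ) 1)), g x = (c * h x).re)
    (hT : IntegrableOn (FHT h) (Ioo (-1) 1)) (K : ℝ) (hK : ∫ x in Ioo (-1 : ℝ) 1, ‖FHT h x‖ ≤ K) :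
    IntegrableOn (fun x => (1 + g x) * Real.log (1 + g x)) (Ioo (-1) 1) ∧
    ∫ x in Ioo (-1 : ℝ) 1, (1 + g x) * Real.log (1 + g x) ≤ Psi (2 * Real.pi * K) K := by
  have hs' : ∀ x, x ∉ Ioo (-1 : ℝ) 1 → g x = 0 := by
    intro x hx
    rcases hs with hs | hs
    · exact hs x fun h => hx ⟨by linarith [h.1], h.2⟩
    · exact hs x fun h => hx ⟨h.1, by linarith [h.2]⟩
  have iT : IntegrableOn (fun x => (c * FHT h x).re) (Ioo (-1) 1) := (hT.const_mul c).re
  refine Greal g hg hg0 hs (fun x => (c * FHT h x).re) ?_ iT K ?_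
  · filter_upwards [FHT_lim h hh] with x hx
    refine ((Complex.continuous_re.tendsto _).comp (hx.const_mul c)).congr' ?_
    filter_upwards [self_mem_nhdsWithin] with ε hε
    exact (re_PV g hs' h hh c hgh x ε hε).symm
  · refine le_trans ?_ hK
    apply integral_mono iT.abs hT.norm
    intro x
    apply (Complex.abs_re_le_norm _).trans
    rw [norm_mul]
    exact mul_le_of_le_one_left (norm_nonneg _) hc

theorem phi_mono (a b : ℝ) (ha : 0 ≤ a) (h : a ≤ b) : a * max (Real.log a) 0 ≤ b * max (Real.log b) 0 := by
  rcases ha.eq_or_lt with rfl | ha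
  · simp; positivity
  · have := Real.log_le_log ha h
    have : 0 ≤ b := by linarith
    gcongr

theorem F_mono (a b : ℝ) (ha : 0 ≤ a) (h : a ≤ b) : (1 + a) * Real.log (1 + a) ≤ (1 + b) * Real.log (1 + b) := by
  have := Real.log_nonneg (by linarith : 1 ≤ 1 + a)
  gcongr
  linarith

theorem t_le (t : ℝ) (ht : 0 ≤ t) : t ≤ 3 + t * max (Real.log t) 0 := by
  have h0 : 0 ≤ t * max (Real.log t) 0 := by positivity
  by_cases h : t ≤ 3
  · linarith
  · push Not at h
    have : 1 ≤ Real.log t := by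
      rw [Real.le_log_iff_exp_le (by linarith)]
      linarith [Real.exp_one_lt_d9]
    have : 1 ≤ max (Real.log t) 0 := this.trans (le_max_left _ _)
    nlinarith

theorem F_le (t : ℝ) (ht : 0 ≤ t) : (1 + t) * Real.log (1 + t) ≤ 6 + 4 * (t * max (Real.log t) 0) := by
  have h0 : 0 ≤ t * max (Real.log t) 0 := by positivity
  have l2 := Real.log_two_lt_d9
  by_cases h : t ≤ 1
  · have := F_mono t 1 ht h
    norm_num at this
    linarith
  · push Not at h
    have h1 : Real.log (1 + t) ≤ Real.log 2 + Real.log t := by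
      rw [← Real.log_mul (by norm_num) (by linarith)]
      exact Real.log_le_log (by linarith) (by linarith)
    have h2 := t_le t ht
    have h3 : 0 ≤ Real.log t := Real.log_nonneg h.le
    rw [max_eq_left h3] at h2 ⊢
    have h4 : 0 ≤ Real.log (1 + t) := Real.log_nonneg (by linarith)
    have h5 : (1 + t) * Real.log (1 + t) ≤ (2 * t) * (1 + Real.log t) :=
      mul_le_mul (by linarith) (by linarith) h4 (by linarith)
    nlinarith

theorem phi_le (t m : ℝ) (ht : 0 ≤ t) (hm : t ≤ 2 * m) : t * max (Real.log t) 0 ≤ 4 * ((1 + m) * Real.log (1 + m)) := by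
  have hm0 : 0 ≤ m := by linarith
  have h1 := phi_mono t (2 * m) ht hm
  refine h1.trans ?_
  have h2 : m ≤ (1 + m) * Real.log (1 + m) := by
    have := Real.one_sub_inv_le_log_of_pos (by linarith : 0 < 1 + m)
    have h3 := mul_le_mul_of_nonneg_left this (by linarith : 0 ≤ 1 + m)
    have h4 : (1 + m) * (1 - (1 + m)⁻¹) = m := by field_simp; ring
    linarith
  have l2 := Real.log_two_lt_d9
  have l20 := Real.log_nonneg (by norm_num : (1:ℝ) ≤ 2)
  have h4 : 0 ≤ Real.log (1 + m) := Real.log_nonneg (by linarith)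
  have h5 : max (Real.log (2 * m)) 0 ≤ Real.log 2 + Real.log (1 + m) := by
    apply max_le _ (by linarith)
    rcases hm0.eq_or_lt with rfl | hm1
    · simp; linarith
    · rw [Real.log_mul (by norm_num) hm1.ne']
      have := Real.log_le_log hm1 (by linarith : m ≤ 1 + m)
      linarith
  have h6 := mul_le_mul_of_nonneg_left h5 (by linarith : 0 ≤ 2 * m)
  nlinarith

theorem LL_int (f : ℝ → ℂ) (hf : MemLlogL f) : IntegrableOn f (Ioo (-1) 1) := by
  have hc : IntegrableOn (fun _ : ℝ => (3:ℝ)) (Ioo (-1 : ℝ) 1) := integrableOn_const (by simp)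
  refine Integrable.mono' (hc.add hf.2) hf.1 (Eventually.of_forall fun x => ?_)
  exact t_le _ (norm_nonneg _)

theorem phi_meas (f : ℝ → ℂ) (hf : AEStronglyMeasurable f μI) :
    AEStronglyMeasurable (fun x => ‖f x‖ * max (Real.log ‖f x‖) 0) (volume.restrict (Ioo (-1 : ℝ) 1)) := by
  have : AEMeasurable f (volume.restrict (Ioo (-1 : ℝ) 1)) := hf.aemeasurable
  apply AEMeasurable.aestronglyMeasurable
  fun_prop

theorem LL_mono (f h : ℝ → ℂ) (hf : MemLlogL f) (hh : AEStronglyMeasurable h μI)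
    (hle : ∀ᵐ x ∂μI, ‖h x‖ ≤ ‖f x‖) : MemLlogL h := by
  refine ⟨hh, hf.2.mono' (phi_meas h hh) ?_⟩
  filter_upwards [hle] with x hx
  rw [Real.norm_of_nonneg (by positivity)]
  exact phi_mono _ _ (norm_nonneg _) hx

theorem LL_F (f : ℝ → ℂ) (hf : MemLlogL f) (s : Set ℝ) (hs : MeasurableSet s) (hsI : s ⊆ Ioo (-1) 1) (c : ℂ) (hc : ‖c‖ ≤ 1) :
    Integrable fun x => (1 + kp s c f x) * Real.log (1 + kp s c f x) := by
  rw [← integrableOn_iff_integrable_of_support_subset (s := Ioo (-1) 1)]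
  · have hc6 : IntegrableOn (fun _ : ℝ => (6:ℝ)) (Ioo (-1 : ℝ) 1) := integrableOn_const (by simp)
    refine Integrable.mono' (hc6.add (hf.2.const_mul 4)) ?_ (Eventually.of_forall fun x => ?_)
    · have := (kp_meas s hs hsI c f hf.1).restrict (s := Ioo (-1) 1) |>.aemeasurable
      apply AEMeasurable.aestronglyMeasurable
      fun_prop
    · have h0 := kp_nonneg s c f x
      rw [Real.norm_of_nonneg (mul_nonneg (by linarith) (Real.log_nonneg (by linarith)))]
      exact (F_mono _ _ h0 (kp_le s c hc f x)).trans (F_le _ (norm_nonneg _))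
  · intro x hx
    by_contra h'
    apply hx
    simp [kp_zero s hsI c f x h']

theorem LL_FHT (f : ℝ → ℂ) (hf : MemLlogL f) : IntegrableOn (FHT f) (Ioo (-1) 1) := by
  have hi := LL_int f hf
  obtain ⟨T, hT, hl⟩ := FHT_split f hi
  have iT : ∀ c : ℂ, ‖c‖ ≤ 1 → IntegrableOn (T c) (Ioo (-1) 1) := fun c hc =>
    Freal _ (kp_int _ measurableSet_Ioo Subset.rfl c hc f hi) (kp_nonneg _ c f)
      (LL_F f hf _ measurableSet_Ioo Subset.rfl c hc) (T c) (hT c hc)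
  have i1 : IntegrableOn (fun x => (((T 1 x - T (-1) x : ℝ) : ℂ) + ((T (-Complex.I) x - T (Complex.I) x : ℝ) : ℂ) * Complex.I)) (Ioo (-1) 1) :=
    (((iT 1 (by simp)).sub (iT (-1) (by simp))).ofReal).add
      ((((iT (-Complex.I) (by simp)).sub (iT (Complex.I) (by simp))).ofReal).mul_const _)
  apply i1.congr
  filter_upwards [ae_restrict_of_ae hl, ae_restrict_of_ae (FHT_lim f hi)] with x a b
  exact tendsto_nhds_unique a b

def cs : Fin 4 → ℂ := ![1, -1, Complex.I, -Complex.I]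

theorem cs_norm (i : Fin 4) : ‖cs i‖ ≤ 1 := by fin_cases i <;> simp [cs]

theorem coreC (f : ℝ → ℂ) (hf : AEStronglyMeasurable f μI)
    (H : ∀ (s : Set ℝ) (i : Fin 4), (s = Ioo 0 1 ∨ s = Ioo (-1) 0) →
      IntegrableOn (fun x => (1 + kp s (cs i) f x) * Real.log (1 + kp s (cs i) f x)) (Ioo (-1) 1)) : MemLlogL f := by
  refine ⟨hf, ?_⟩
  have hi : IntegrableOn (fun x => 4 * ((∑ i, (1 + kp (Ioo 0 1) (cs i) f x) * Real.log (1 + kp (Ioo 0 1) (cs i) f x)) +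
    ∑ i, (1 + kp (Ioo (-1) 0) (cs i) f x) * Real.log (1 + kp (Ioo (-1) 0) (cs i) f x))) (Ioo (-1) 1) := by
    apply Integrable.const_mul
    apply Integrable.add
    · exact integrable_finsetSum _ fun i _ => H _ i (Or.inl rfl)
    · exact integrable_finsetSum _ fun i _ => H _ i (Or.inr rfl)
  refine hi.mono' (phi_meas f hf) ?_
  have hne : ∀ᵐ x : ℝ, x ≠ 0 := by simp [ae_iff]
  rw [ae_restrict_iff' measurableSet_Ioo]
  filter_upwards [hne] with x hx hxI
  rw [Real.norm_of_nonneg (by positivity)]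
  have hF0 : ∀ s i, 0 ≤ (1 + kp s (cs i) f x) * Real.log (1 + kp s (cs i) f x) := fun s i => by
    have h0 := kp_nonneg s (cs i) f x
    exact mul_nonneg (by linarith) (Real.log_nonneg (by linarith))
  have hex : ∃ i : Fin 4, ‖f x‖ ≤ 2 * max ((cs i * f x).re) 0 := by
    have hn := Complex.norm_le_abs_re_add_abs_im (f x)
    have hr : ∃ i : Fin 4, |(f x).re| ≤ max ((cs i * f x).re) 0 := by
      rcases le_total 0 (f x).re with h | h
      · exact ⟨0, by simp [cs, abs_of_nonneg h]⟩
      · exact ⟨1, by simp [cs, abs_of_nonpos h]⟩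
    have hi : ∃ i : Fin 4, |(f x).im| ≤ max ((cs i * f x).re) 0 := by
      rcases le_total 0 (f x).im with h | h
      · exact ⟨3, by simp [cs, abs_of_nonneg h]⟩
      · exact ⟨2, by simp [cs, abs_of_nonpos h]⟩
    rcases le_total |(f x).re| |(f x).im| with h | h
    · obtain ⟨i, hi⟩ := hi; exact ⟨i, by linarith⟩
    · obtain ⟨i, hi⟩ := hr; exact ⟨i, by linarith⟩
  obtain ⟨i, hi⟩ := hex
  have key : ∀ s : Set ℝ, x ∈ s → ‖f x‖ * max (Real.log ‖f x‖) 0 ≤ 4 * ∑ i, (1 + kp s (cs i) f x) * Real.log (1 + kp s (cs i) f x) := by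
    intro s hs
    have e : kp s (cs i) f x = max ((cs i * f x).re) 0 := indicator_of_mem hs _
    rw [← e] at hi
    refine (phi_le _ _ (norm_nonneg _) hi).trans ?_
    gcongr
    exact Finset.single_le_sum (f := fun i => (1 + kp s (cs i) f x) * Real.log (1 + kp s (cs i) f x)) (fun i _ => hF0 s i) (Finset.mem_univ i)
  have n1 := Finset.sum_nonneg (s := Finset.univ) fun i _ => hF0 (Ioo 0 1) i
  have n2 := Finset.sum_nonneg (s := Finset.univ) fun i _ => hF0 (Ioo (-1) 0) i
  rcases lt_or_gt_of_ne hx with h | h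
  · have := key (Ioo (-1) 0) ⟨hxI.1, h⟩
    linarith
  · have := key (Ioo 0 1) ⟨h, hxI.2⟩
    linarith

theorem side (s : Set ℝ) (hs : s = Ioo 0 1 ∨ s = Ioo (-1) 0) : MeasurableSet s ∧ s ⊆ Ioo (-1) 1 := by
  rcases hs with rfl | rfl
  · exact ⟨measurableSet_Ioo, Ioo_subset_Ioo_left (by norm_num)⟩
  · exact ⟨measurableSet_Ioo, Ioo_subset_Ioo_right (by norm_num)⟩

theorem side_supp (s : Set ℝ) (hs : s = Ioo 0 1 ∨ s = Ioo (-1) 0) (g : ℝ → ℝ) (hg : ∀ x, x ∉ s → g x = 0) :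
    (∀ x, x ∉ Ioo (0:ℝ) 1 → g x = 0) ∨ (∀ x, x ∉ Ioo (-1:ℝ) 0 → g x = 0) := by
  rcases hs with rfl | rfl
  · exact Or.inl hg
  · exact Or.inr hg

theorem part1b (f : ℝ → ℂ) (hf : IntegrableOn f (Ioo (-1) 1))
    (H : ∀ A : Set ℝ, MeasurableSet A → IntegrableOn (FHT (A.indicator f)) (Ioo (-1) 1)) : MemLlogL f := by
  apply coreC f hf.1
  intro s i hs
  obtain ⟨hsm, hsI⟩ := side s hs
  obtain ⟨f', hf', hff⟩ := hf.1
  have hA : MeasurableSet (s ∩ {x | 0 < (cs i * f' x).re}) := by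
    apply hsm.inter
    have := hf'.measurable
    exact measurableSet_lt measurable_const (by fun_prop)
  refine (coreD (kp s (cs i) f) (kp_int s hsm hsI _ (cs_norm i) f hf) (kp_nonneg _ _ _)
    (side_supp s hs _ fun x hx => indicator_of_notMem hx _) _ (hf.indicator hA) (cs i) (cs_norm i) ?_ (H _ hA) _ le_rfl).1
  filter_upwards [hff] with x hx
  unfold kp
  by_cases h1 : x ∈ s
  · rw [indicator_of_mem h1]
    by_cases h2 : 0 < (cs i * f' x).re
    · rw [indicator_of_mem (show x ∈ s ∩ {x | 0 < (cs i * f' x).re} from ⟨h1, h2⟩), hx, max_eq_left h2.le]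
    · rw [indicator_of_notMem (fun h => h2 h.2), hx, max_eq_right (not_lt.mp h2)]; simp
  · rw [indicator_of_notMem h1, indicator_of_notMem (fun h => h1 h.1)]; simp

theorem part3 (X : BanachFunctionSpace) (S : (ℝ → ℂ) → ℝ → ℂ) (C : ℝ)
    (hS : ∀ f, X.Mem f → IntegrableOn (S f) (Set.Ioo (-1 : ℝ) 1) ∧
          ∫ x in Set.Ioo (-1 : ℝ) 1, ‖S f x‖ ≤ C * X.nrm f)
    (hSF : ∀ f, MemLlogL f → S f =ᵐ[μI] FHT f) (f : ℝ → ℂ) (hf : X.Mem f) : MemLlogL f := by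
  have hfm := X.mem_meas f hf
  apply coreC f hfm
  intro s i hs
  obtain ⟨hsm, hsI⟩ := side s hs
  set g := kp s (cs i) f with hg
  have hgm : AEStronglyMeasurable g volume := kp_meas s hsm hsI _ f hfm
  have hg0 : ∀ x, 0 ≤ g x := kp_nonneg _ _ _
  have hgle : ∀ x, g x ≤ ‖f x‖ := kp_le s _ (cs_norm i) f
  have hgs : ∀ x, x ∉ s → g x = 0 := fun x hx => indicator_of_notMem hx _
  set gn : ℕ → ℝ → ℝ := fun n x => min (g x) n with hgn
  have gn0 : ∀ n x, 0 ≤ gn n x := fun n x => le_min (hg0 x) (by positivity)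
  have gnm : ∀ n, AEStronglyMeasurable (gn n) volume := fun n => hgm.inf aestronglyMeasurable_const
  have gns : ∀ n x, x ∉ s → gn n x = 0 := fun n x hx => by simp [hgn, hgs x hx]
  have gnle : ∀ n x, gn n x ≤ g x := fun n x => min_le_left _ _
  have gnn : ∀ n x, gn n x ≤ n := fun n x => min_le_right _ _
  have hfin : IsFiniteMeasure (volume.restrict (Ioo (-1 : ℝ) 1)) := ⟨by simp⟩
  have gni : ∀ n, Integrable (gn n) := by
    intro n
    rw [← integrableOn_iff_integrable_of_support_subset (s := Ioo (-1) 1)]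
    · refine Integrable.of_bound (gnm n).restrict n (Eventually.of_forall fun x => ?_)
      rw [Real.norm_of_nonneg (gn0 n x)]; exact gnn n x
    · intro x hx
      by_contra h'
      exact hx (gns n x fun h => h' (hsI h))
  have nG : ∀ n x, ‖(gn n x : ℂ)‖ = gn n x := fun n x => Complex.norm_of_nonneg (gn0 n x)
  have GLL : ∀ n, MemLlogL (fun x => (gn n x : ℂ)) := by
    intro n
    have hm : AEStronglyMeasurable (fun x => (gn n x : ℂ)) μI := (gni n).ofReal.1.restrict
    refine ⟨hm, Integrable.of_bound (phi_meas _ hm) ((n:ℝ) * max (Real.log n) 0) (Eventually.of_forall fun x => ?_)⟩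
    rw [Real.norm_of_nonneg (by positivity), nG]
    exact phi_mono _ _ (gn0 n x) (gnn n x)
  set K := |C| * X.nrm f with hK
  have main : ∀ n, IntegrableOn (fun x => (1 + gn n x) * Real.log (1 + gn n x)) (Ioo (-1) 1) ∧
    ∫ x in Ioo (-1 : ℝ) 1, (1 + gn n x) * Real.log (1 + gn n x) ≤ Psi (2 * Real.pi * K) K := by
    intro n
    have hid := X.ideal f (fun x => (gn n x : ℂ)) hf (GLL n).1 (Eventually.of_forall fun x => by
      rw [nG]; exact (gnle n x).trans (hgle x))
    have hs1 := hS _ hid.1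
    have hae : S (fun x => (gn n x : ℂ)) =ᵐ[volume.restrict (Ioo (-1 : ℝ) 1)] FHT (fun x => (gn n x : ℂ)) := hSF _ (GLL n)
    refine coreD (gn n) (gni n) (gn0 n) (side_supp s hs _ (gns n)) (fun x => (gn n x : ℂ)) (gni n).ofReal.integrableOn 1 (by simp)
      (Eventually.of_forall fun x => by simp) (hs1.1.congr hae) K ?_
    have e : ∫ x in Ioo (-1 : ℝ) 1, ‖FHT (fun x => (gn n x : ℂ)) x‖ = ∫ x in Ioo (-1 : ℝ) 1, ‖S (fun x => (gn n x : ℂ)) x‖ := by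
      apply integral_congr_ae
      filter_upwards [hae] with x hx
      rw [hx]
    rw [e]
    refine hs1.2.trans ?_
    have := X.nrm_nonneg (fun x => (gn n x : ℂ))
    calc C * X.nrm (fun x => (gn n x : ℂ)) ≤ |C| * X.nrm (fun x => (gn n x : ℂ)) := by
          gcongr; exact le_abs_self C
      _ ≤ |C| * X.nrm f := by gcongr; exact hid.2
  have F0 : ∀ n x, 0 ≤ (1 + gn n x) * Real.log (1 + gn n x) := fun n x =>
    mul_nonneg (by linarith [gn0 n x]) (Real.log_nonneg (by linarith [gn0 n x]))
  refine (fatou_L1 (volume.restrict (Ioo (-1 : ℝ) 1)) (fun n x => (1 + gn n x) * Real.log (1 + gn n x)) _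
    (Psi (2 * Real.pi * K) K) (fun n => (main n).1) (fun n => ?_) (Eventually.of_forall fun x => ?_)).1
  · simp only [abs_of_nonneg (F0 n _)]
    exact (main n).2
  · apply tendsto_const_nhds.congr'
    obtain ⟨N, hN⟩ := exists_nat_ge (g x)
    filter_upwards [eventually_ge_atTop N] with n hn
    have : gn n x = g x := min_eq_left (hN.trans (by exact_mod_cast hn))
    simp only [this]

/-- `f ∈ L¹` is in `L log L(-1,1)` iff `T(fχ_A) ∈ L¹` for every Borel `A`; the optimal
domain `[T, L¹] = {f ∈ L¹ : T(h) ∈ L¹ whenever |h| ≤ |f|}` equals `L log L`; and `T` admits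
no continuous linear `L¹`-valued extension to a strictly larger Banach function space. -/
theorem optimal_domain :
    (∀ f : ℝ → ℂ, IntegrableOn f (Set.Ioo (-1 : ℝ) 1) →
      (MemLlogL f ↔
        ∀ A : Set ℝ, MeasurableSet A →
          IntegrableOn (FHT (A.indicator f)) (Set.Ioo (-1 : ℝ) 1))) ∧
    (∀ f : ℝ → ℂ,
      (IntegrableOn f (Set.Ioo (-1 : ℝ) 1) ∧
        ∀ h : ℝ → ℂ, AEStronglyMeasurable h μI → (∀ᵐ x ∂μI, ‖h x‖ ≤ ‖f x‖) →
          IntegrableOn (FHT h) (Set.Ioo (-1 : ℝ) 1))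
      ↔ MemLlogL f) ∧
    ¬ ∃ (X : BanachFunctionSpace) (S : (ℝ → ℂ) → ℝ → ℂ) (C : ℝ),
        (∀ f, MemLlogL f → X.Mem f) ∧
        (∃ f, X.Mem f ∧ ¬ MemLlogL f) ∧
        (∀ f, X.Mem f → IntegrableOn (S f) (Set.Ioo (-1 : ℝ) 1) ∧
          ∫ x in Set.Ioo (-1 : ℝ) 1, ‖S f x‖ ≤ C * X.nrm f) ∧
        (∀ f g, X.Mem f → X.Mem g →
          S (f + g) =ᵐ[μI] fun x => S f x + S g x) ∧
        (∀ (c : ℂ) (f : ℝ → ℂ), X.Mem f →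
          S (c • f) =ᵐ[μI] fun x => c * S f x) ∧
        (∀ f, MemLlogL f → S f =ᵐ[μI] FHT f) := by
  refine ⟨fun f hf => ⟨fun h A hA => ?_, fun H => part1b f hf H⟩,
    fun f => ⟨fun ⟨hi, H⟩ => part1b f hi (fun A hA => ?_),
      fun h => ⟨LL_int f h, fun k hk hle => LL_FHT k (LL_mono f k h hk hle)⟩⟩, ?_⟩
  · exact LL_FHT _ (LL_mono f _ h (hf.1.indicator hA)
      (Eventually.of_forall fun x => norm_indicator_le_norm_self _ _))
  · exact H (A.indicator f) (hi.1.indicator hA)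
      (Eventually.of_forall fun x => norm_indicator_le_norm_self _ _)
  · rintro ⟨X, S, C, -, ⟨f, hf, hnf⟩, hS, -, -, hSF⟩
    exact hnf (part3 X S C hS hSF f hf)
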